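/- arXiv:1103.3088 — 2 statements merged into one kernel-verified Lean document; each statement's English description precedes it below -/
import Mathlib

section
/- Kuijlaars–Saff upper bound: for every real s > 2, the minimal Riesz s-energy on the 2-sphere E_s(S²; N) := inf { ∑_{j≠k} |x_j − x_k|^{−s} : x_1,…,x_N ∈ S² } satisfies limsup_{N→∞} E_s(S²; N) / N^{1+s/2} ≤ ( √3 / (8π) )^{s/2} · ζ_Λ(s), where ζ_Λ(s) := ∑_{(m,n) ∈ Z² \ {(0,0)}} (m² + mn + n²)^{−s/2} is the (convergent for s > 2) zeta function of the hexagonal lattice. -/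
open MeasureTheory Metric Real Filter
open scoped BigOperators ENNReal NNReal RealInnerProductSpace Topology

noncomputable section

/-- Normalized uniform (surface) probability measure `σ_d` on the unit sphere
`S^d ⊂ ℝ^{d+1}`, defined as normalized `d`-dimensional Hausdorff measure. -/
def sigmaMeasure (d : ℕ) : Measure (EuclideanSpace ℝ (Fin (d + 1))) :=
  (μH[(d : ℝ)] (sphere (0 : EuclideanSpace ℝ (Fin (d + 1))) 1))⁻¹ •
    μH[(d : ℝ)].restrict (sphere (0 : EuclideanSpace ℝ (Fin (d + 1))) 1)

/-- Squared spherical cap `L²` discrepancy of the `N`-point configuration `x` on `S^d`: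
`∫_{-1}^{1} ∫_{S^d} |#{k : x_k ∈ C(y;t)}/N − σ_d(C(y;t))|² dσ_d(y) dt`. -/
def L2DiscSq (d N : ℕ) (x : Fin N → EuclideanSpace ℝ (Fin (d + 1))) : ℝ :=
  ∫ t in Set.Icc (-1 : ℝ) 1, ∫ y,
    ((Nat.card {k : Fin N // t ≤ ⟪y, x k⟫} : ℝ) / N
      - (sigmaMeasure d {z | t ≤ ⟪y, z⟫}).toReal) ^ 2 ∂ sigmaMeasure d

/-- Spherical cap `L²` discrepancy. -/
def L2Disc (d N : ℕ) (x : Fin N → EuclideanSpace ℝ (Fin (d + 1))) : ℝ :=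
  Real.sqrt (L2DiscSq d N x)

/-- The minimal Riesz `s`-energy `E_s(S^d; N) = inf { ∑_{j≠k} |x_j − x_k|^{−s} }` over all
`N`-point configurations on `S^d` (with value `∞` for a pair of coincident points). -/
def minRieszEnergy (s : ℝ) (d N : ℕ) : ℝ≥0∞ :=
  ⨅ x : {x : Fin N → EuclideanSpace ℝ (Fin (d + 1)) //
    ∀ k, x k ∈ sphere (0 : EuclideanSpace ℝ (Fin (d + 1))) 1},
    ∑ j, ∑ k, if j ≠ k then edist (x.1 j) (x.1 k) ^ (-s) else 0

/-! On a small patch of the sphere there is a chart which is an isometry up to a factor close to 1,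
and finitely many such patches, pairwise at positive distance, fill all but a small part of the area
`4π`. Place on each patch the image of a rescaled copy of a lattice `L`, with the scale chosen so
that the patches carry `N` points in total, that is with about `N / 4π` points per unit area. The
interactions of a point with those on its own patch add up to at most the Epstein zeta function of
`L`, times the scale to the power `-s`. The interactions between distinct patches are bounded, so
they add up to `O(N²)`, which is `o(N^{1+s/2})` as `s > 2`. -/

open Module Set Bornology

section RieszEnergy

variable {X ι : Type*}

/-- The Riesz `s`-energy `∑_{j ≠ k} |x_j − x_k|^{−s}` of a finite configuration `x`, with value `∞`
when two of its points coincide and `s` is positive. -/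
def rieszEnergy [PseudoEMetricSpace X] [Fintype ι] [DecidableEq ι] (s : ℝ) (x : ι → X) : ℝ≥0∞ :=
  ∑ j, ∑ k, if j ≠ k then edist (x j) (x k) ^ (-s) else 0

/-- The minimal Riesz `s`-energy of `N` points of the space `X`. -/
def minEnergy (s : ℝ) (X : Type*) [PseudoEMetricSpace X] (N : ℕ) : ℝ≥0∞ :=
  ⨅ x : Fin N → X, rieszEnergy s x

theorem minRieszEnergy_eq_minEnergy (s : ℝ) (d N : ℕ) :
    minRieszEnergy s d N =
      minEnergy s (sphere (0 : EuclideanSpace ℝ (Fin (d + 1))) 1) N :=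
  (Equiv.subtypePiEquivPi (β := fun _ : Fin N => EuclideanSpace ℝ (Fin (d + 1)))
    (p := fun _ z => z ∈ sphere 0 1)).iInf_congr fun _ => rfl

theorem rieszEnergy_eq_ofReal [MetricSpace X] [Fintype ι] [DecidableEq ι] (s : ℝ) {x : ι → X}
    (hx : Function.Injective x) :
    rieszEnergy s x =
      ENNReal.ofReal (∑ j, ∑ k ∈ Finset.univ.erase j, dist (x j) (x k) ^ (-s)) := by
  rw [ENNReal.ofReal_sum_of_nonneg fun _ _ => by positivity]
  refine Finset.sum_congr rfl fun j _ => ?_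
  rw [ENNReal.ofReal_sum_of_nonneg fun _ _ => by positivity, ← Finset.sum_filter,
    Finset.filter_ne]
  refine Finset.sum_congr rfl fun k hk => ?_
  have hpos : 0 < dist (x j) (x k) := dist_pos.2 (hx.ne (Finset.ne_of_mem_erase hk).symm)
  rw [edist_dist, ENNReal.ofReal_rpow_of_pos hpos]

theorem toReal_minEnergy_le_mul [MetricSpace X] {s B : ℝ} {N : ℕ} {x : Fin N → X}
    (hx : Function.Injective x) (hB : 0 ≤ B)
    (hrow : ∀ j, ∑ k ∈ Finset.univ.erase j, dist (x j) (x k) ^ (-s) ≤ B) :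
    (minEnergy s X N).toReal ≤ N * B := by
  refine ENNReal.toReal_le_of_le_ofReal (by positivity) ((iInf_le _ x).trans ?_)
  rw [rieszEnergy_eq_ofReal s hx]
  refine ENNReal.ofReal_le_ofReal ((Finset.sum_le_sum fun j _ => hrow j).trans_eq ?_)
  simp

end RieszEnergy

section EpsteinZeta

variable {E : Type*} [NormedAddCommGroup E]

/-- The Epstein zeta function `∑_{v ∈ L ∖ {0}} ‖v‖^{−s}` of a lattice `L`. The sum may run over all
of `L`, since `0 ^ (-s) = 0` for `s ≠ 0`. -/
def epsteinZeta (L : Submodule ℤ E) (s : ℝ) : ℝ :=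
  ∑' v : L, ‖v‖ ^ (-s)

theorem epsteinZeta_nonneg (L : Submodule ℤ E) (s : ℝ) : 0 ≤ epsteinZeta L s :=
  tsum_nonneg fun _ => by positivity

variable [NormedSpace ℝ E] [FiniteDimensional ℝ E] {L : Submodule ℤ E} [DiscreteTopology L]

theorem sum_norm_sub_rpow_le_epsteinZeta {s : ℝ} (hs : finrank ℤ L < s) {J : Type*}
    {S : Finset J} {v : J → L} (hv : InjOn v S) (w : L) :
    ∑ k ∈ S, ‖v k - w‖ ^ (-s) ≤ epsteinZeta L s := by
  classical
  have hinj : InjOn (fun k => v k - w) S := fun _ hj _ hk h => hv hj hk (sub_left_injective h)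
  rw [← Finset.sum_image (f := fun u : L => ‖u‖ ^ (-s)) hinj]
  exact (ZLattice.summable_norm_rpow L (-s) (by linarith)).sum_le_tsum _ fun _ _ => by positivity

end EpsteinZeta

section AntilipschitzPacking

variable {E X ι : Type*} [NormedAddCommGroup E] [MetricSpace X]

/-- A family of charts `F i`, defined on compact Jordan measurable domains `D i`, which pack
disjoint patches into `X` and shrink distances at most by the factor `κ`. -/
structure IsAntilipschitzPacking [MeasureSpace E] (κ : ℝ) (D : ι → Set E) (F : ι → E → X) :
    Prop where
  isCompact (i : ι) : IsCompact (D i)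
  volume_frontier (i : ι) : volume (frontier (D i)) = 0
  continuousOn (i : ι) : ContinuousOn (F i) (D i)
  mul_dist_le (i : ι) : ∀ v ∈ D i, ∀ w ∈ D i, κ * dist v w ≤ dist (F i v) (F i w)
  disjoint : Pairwise fun i j => Disjoint (F i '' D i) (F j '' D j)

section Sites

variable [NormedSpace ℝ E] {L : Submodule ℤ E}

/-- The pairs `(i, v)` of a patch and a lattice vector for which the point `ρ • v` of the rescaled
lattice lies in the domain `D i`. -/
def latticeSites (L : Submodule ℤ E) (D : ι → Set E) (ρ : ℝ) : Set (ι × L) :=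
  {p | ρ • (p.2 : E) ∈ D p.1}

/-- The point of `X` onto which the chart `F i` maps the rescaled lattice point `ρ • v`, where
`p = (i, v)`. -/
def sitePoint (F : ι → E → X) (ρ : ℝ) (p : ι × L) : X :=
  F p.1 (ρ • (p.2 : E))

end Sites

namespace IsAntilipschitzPacking

variable [MeasureSpace E] {κ : ℝ} {D : ι → Set E} {F : ι → E → X}

theorem exists_separation [Finite ι] (h : IsAntilipschitzPacking κ D F) :
    ∃ δ > 0, ∀ i j, i ≠ j → ∀ v ∈ D i, ∀ w ∈ D j, δ ≤ dist (F i v) (F j w) := by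
  have hpair (p : ι × ι) : ∀ᶠ δ in 𝓝[>] (0 : ℝ), p.1 ≠ p.2 →
      ∀ v ∈ D p.1, ∀ w ∈ D p.2, δ ≤ dist (F p.1 v) (F p.2 w) := by
    by_cases hp : p.1 = p.2
    · simp [hp]
    have hcompact (i : ι) := (h.isCompact i).image_of_continuousOn (h.continuousOn i)
    obtain ⟨r, hr, hlt⟩ :=
      exists_pos_forall_lt_edist (hcompact p.1) (hcompact p.2).isClosed (h.disjoint hp)
    filter_upwards [Ioo_mem_nhdsGT (NNReal.coe_pos.2 hr)] with δ hδ _ v hv w hw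
    have hvw := hlt _ (mem_image_of_mem _ hv) _ (mem_image_of_mem _ hw)
    rw [edist_nndist, ENNReal.coe_lt_coe, ← NNReal.coe_lt_coe, coe_nndist] at hvw
    exact (hδ.2.trans hvw).le
  obtain ⟨δ, hδ, hpos⟩ := ((eventually_all.2 hpair).and self_mem_nhdsWithin).exists
  exact ⟨δ, hpos, fun i j => hδ (i, j)⟩

variable [NormedSpace ℝ E] {L : Submodule ℤ E} {ρ : ℝ}

theorem mul_norm_sub_le_dist_sitePoint (h : IsAntilipschitzPacking κ D F) (hρ : 0 ≤ ρ)
    {p p' : ι × L} (hp : p ∈ latticeSites L D ρ) (hp' : p' ∈ latticeSites L D ρ)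
    (hpatch : p.1 = p'.1) :
    κ * ρ * ‖p.2 - p'.2‖ ≤ dist (sitePoint F ρ p) (sitePoint F ρ p') := by
  obtain ⟨i, v⟩ := p
  obtain ⟨i', v'⟩ := p'
  obtain rfl : i = i' := hpatch
  have hdist := h.mul_dist_le i _ hp _ hp'
  rwa [dist_eq_norm, ← smul_sub, norm_smul, Real.norm_of_nonneg hρ, ← mul_assoc] at hdist

theorem injOn_sitePoint (h : IsAntilipschitzPacking κ D F) (hκ : 0 < κ) (hρ : 0 < ρ) :
    InjOn (sitePoint F ρ) (latticeSites L D ρ) := by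
  intro p hp p' hp' heq
  by_cases hpatch : p.1 = p'.1
  · have hle := h.mul_norm_sub_le_dist_sitePoint hρ.le hp hp' hpatch
    rw [dist_eq_zero.2 heq] at hle
    have hzero : ‖p.2 - p'.2‖ = 0 :=
      (nonpos_of_mul_nonpos_right hle (mul_pos hκ hρ)).antisymm (norm_nonneg _)
    exact Prod.ext hpatch (sub_eq_zero.1 (norm_eq_zero.1 hzero))
  · exact absurd heq
      ((h.disjoint hpatch).ne_of_mem (mem_image_of_mem _ hp) (mem_image_of_mem _ hp'))

variable [FiniteDimensional ℝ E] [DiscreteTopology L]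

theorem sum_dist_sitePoint_rpow_le_epsteinZeta (h : IsAntilipschitzPacking κ D F) (hκ : 0 < κ)
    (hρ : 0 < ρ) {s : ℝ} (hs : finrank ℤ L < s) {p : ι × L} (hp : p ∈ latticeSites L D ρ)
    {T : Finset (ι × L)} (hT : ↑T ⊆ latticeSites L D ρ) (hpatch : ∀ p' ∈ T, p'.1 = p.1)
    (hpT : p ∉ T) :
    ∑ p' ∈ T, dist (sitePoint F ρ p) (sitePoint F ρ p') ^ (-s) ≤
      (κ * ρ) ^ (-s) * epsteinZeta L s := by
  have hinj : InjOn Prod.snd (T : Set (ι × L)) := fun a ha b hb hab =>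
    Prod.ext ((hpatch a ha).trans (hpatch b hb).symm) hab
  refine le_trans ?_ (mul_le_mul_of_nonneg_left
    (sum_norm_sub_rpow_le_epsteinZeta hs hinj p.2) (by positivity))
  rw [Finset.mul_sum]
  refine Finset.sum_le_sum fun p' hp' => ?_
  have hne : p'.2 - p.2 ≠ 0 := fun h0 =>
    hpT ((Prod.ext (hpatch p' hp') (sub_eq_zero.1 h0) : p' = p) ▸ hp')
  rw [← Real.mul_rpow (by positivity) (norm_nonneg _), dist_comm]
  exact Real.rpow_le_rpow_of_nonpos (mul_pos (mul_pos hκ hρ) (norm_pos_iff.2 hne))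
    (h.mul_norm_sub_le_dist_sitePoint hρ.le (hT hp') hp (hpatch p' hp'))
    (neg_nonpos.2 ((Nat.cast_nonneg _).trans hs.le))

theorem sum_dist_sitePoint_rpow_le (h : IsAntilipschitzPacking κ D F) (hκ : 0 < κ) {δ : ℝ}
    (hδ : 0 < δ) (hsep : ∀ i j, i ≠ j → ∀ v ∈ D i, ∀ w ∈ D j, δ ≤ dist (F i v) (F j w))
    (hρ : 0 < ρ) {s : ℝ} (hs : finrank ℤ L < s) {p : ι × L} (hp : p ∈ latticeSites L D ρ)
    {T : Finset (ι × L)} (hT : ↑T ⊆ latticeSites L D ρ) (hpT : p ∉ T) :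
    ∑ p' ∈ T, dist (sitePoint F ρ p) (sitePoint F ρ p') ^ (-s) ≤
      (κ * ρ) ^ (-s) * epsteinZeta L s + T.card * δ ^ (-s) := by
  classical
  rw [← Finset.sum_filter_add_sum_filter_not T fun p' => p'.1 = p.1]
  refine add_le_add ?_ ?_
  · exact h.sum_dist_sitePoint_rpow_le_epsteinZeta hκ hρ hs hp
      (fun p' hp' => hT (Finset.mem_of_mem_filter _ hp'))
      (fun p' hp' => (Finset.mem_filter.1 hp').2) fun hp' => hpT (Finset.mem_of_mem_filter _ hp')
  · refine (Finset.sum_le_card_nsmul _ _ (δ ^ (-s)) fun p' hp' => ?_).trans ?_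
    · obtain ⟨hp'T, hpatch⟩ := Finset.mem_filter.1 hp'
      exact Real.rpow_le_rpow_of_nonpos hδ (hsep _ _ (Ne.symm hpatch) _ hp _ (hT hp'T))
        (neg_nonpos.2 ((Nat.cast_nonneg _).trans hs.le))
    · rw [nsmul_eq_mul]
      gcongr
      exact Finset.filter_subset _ _

theorem toReal_minEnergy_le (h : IsAntilipschitzPacking κ D F) (hκ : 0 < κ) {δ : ℝ} (hδ : 0 < δ)
    (hsep : ∀ i j, i ≠ j → ∀ v ∈ D i, ∀ w ∈ D j, δ ≤ dist (F i v) (F j w)) (hρ : 0 < ρ)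
    {s : ℝ} (hs : finrank ℤ L < s) {N : ℕ} (hN : N ≤ (latticeSites L D ρ).ncard) :
    (minEnergy s X N).toReal ≤ N * ((κ * ρ) ^ (-s) * epsteinZeta L s + N * δ ^ (-s)) := by
  classical
  have hzeta := epsteinZeta_nonneg L s
  obtain ⟨S, hS, hcard⟩ := exists_subset_card_eq hN
  rcases N.eq_zero_or_pos with rfl | hNpos
  · exact toReal_minEnergy_le_mul (Function.injective_of_subsingleton Fin.elim0)
      (by positivity) fun j => j.elim0
  have : Finite S := Set.finite_of_ncard_pos (hcard ▸ hNpos)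
  let e : Fin N ≃ S := (Finite.equivFinOfCardEq hcard).symm
  let q : Fin N ↪ ι × L := e.toEmbedding.trans (Function.Embedding.subtype _)
  have hq (j : Fin N) : q j ∈ latticeSites L D ρ := hS (e j).2
  refine toReal_minEnergy_le_mul (x := fun j => sitePoint F ρ (q j))
    (fun j k hjk => q.injective (h.injOn_sitePoint hκ hρ (hq j) (hq k) hjk))
    (by positivity) fun j => ?_
  have hle := h.sum_dist_sitePoint_rpow_le hκ hδ hsep hρ hs (hq j)
    (T := (Finset.univ.erase j).map q)
    (by simpa [subset_def] using fun k _ => hq k) (by simp)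
  rw [Finset.sum_map] at hle
  refine hle.trans (add_le_add_right (mul_le_mul_of_nonneg_right ?_ (by positivity)) _)
  exact_mod_cast (Finset.card_map q).trans_le (Finset.card_le_univ _ |>.trans_eq (by simp))

end IsAntilipschitzPacking

end AntilipschitzPacking

section LatticeCount

variable {E : Type*} [NormedAddCommGroup E]

theorem finite_setOf_smul_mem [NormedSpace ℝ E] [FiniteDimensional ℝ E] (L : Submodule ℤ E)
    [DiscreteTopology L] {S : Set E} (hS : IsBounded S) {ρ : ℝ} (hρ : ρ ≠ 0) :
    {v : L | ρ • (v : E) ∈ S}.Finite := by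
  have hclosed : IsClosed (L : Set E) := AddSubgroup.isClosed_of_discrete (H := L.toAddSubgroup)
  have hfinite := finite_isBounded_inter_isClosed ⟨inferInstanceAs (DiscreteTopology L)⟩
    (hS.smul₀ ρ⁻¹) hclosed
  refine (hfinite.preimage Subtype.val_injective.injOn).subset fun v hv => ?_
  exact ⟨(mem_inv_smul_set_iff₀ hρ _ _).2 hv, v.2⟩

variable [InnerProductSpace ℝ E] [FiniteDimensional ℝ E] [MeasurableSpace E] [BorelSpace E]
  (L : Submodule ℤ E) [DiscreteTopology L] [IsZLattice ℝ L]

theorem tendsto_ncard_setOf_inv_smul_mem_div_pow {S : Set E} (hS : IsBounded S)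
    (hmeas : MeasurableSet S) (hfrontier : volume (frontier S) = 0) :
    Tendsto (fun n : ℕ => ({v : L | (n : ℝ)⁻¹ • (v : E) ∈ S}.ncard : ℝ) / n ^ finrank ℝ E) atTop
      (𝓝 (volume.real S / ZLattice.covolume L)) := by
  refine (ZLattice.covolume.tendsto_card_div_pow' L hS hmeas hfrontier).congr' ?_
  filter_upwards [eventually_ne_atTop 0] with n hn
  have hinj : Function.Injective fun v : L => (n : ℝ)⁻¹ • (v : E) :=
    (smul_right_injective E (by positivity)).comp Subtype.val_injective
  rw [Nat.card_coe_set_eq, ← ncard_image_of_injective _ hinj]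
  congr! 3
  ext x
  simp only [mem_inter_iff, mem_smul_set, mem_image, mem_ofPred_eq, Subtype.exists,
    SetLike.mem_coe, exists_and_left, exists_prop]
  constructor
  · rintro ⟨hx, v, hv, rfl⟩
    exact ⟨v, hx, hv, rfl⟩
  · rintro ⟨v, hx, hv, rfl⟩
    exact ⟨hx, v, hv, rfl⟩

theorem tendsto_ncard_latticeSites_div_pow {ι : Type*} [Fintype ι] {D : ι → Set E}
    (hD : ∀ i, IsCompact (D i)) (hfrontier : ∀ i, volume (frontier (D i)) = 0) :
    Tendsto (fun n : ℕ => ((latticeSites L D (n : ℝ)⁻¹).ncard : ℝ) / n ^ finrank ℝ E) atTop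
      (𝓝 ((∑ i, volume.real (D i)) / ZLattice.covolume L)) := by
  rw [Finset.sum_div]
  refine (tendsto_finsetSum _ fun i _ => tendsto_ncard_setOf_inv_smul_mem_div_pow L
    (hD i).isBounded (hD i).measurableSet (hfrontier i)).congr' ?_
  filter_upwards [eventually_ne_atTop 0] with n hn
  have hfinite (i : ι) : Finite {v : L | (n : ℝ)⁻¹ • (v : E) ∈ D i} :=
    finite_setOf_smul_mem L (hD i).isBounded (by positivity)
  rw [← Finset.sum_div, ← Nat.cast_sum]
  congr 2
  exact Nat.card_sigma.symm.trans (Nat.card_congr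
    (Equiv.subtypeProdEquivSigmaSubtype fun i (v : L) => (n : ℝ)⁻¹ • (v : E) ∈ D i).symm)

end LatticeCount

section Asymptotics

theorem tendsto_ceil_mul_rpow_inv_atTop {B d : ℝ} (hB : 0 < B) (hd : 0 < d) :
    Tendsto (fun N : ℕ => ⌈(B * N) ^ d⁻¹⌉₊) atTop atTop :=
  tendsto_nat_ceil_atTop.comp ((tendsto_rpow_atTop (inv_pos.2 hd)).comp
    (tendsto_natCast_atTop_atTop.const_mul_atTop hB))

theorem tendsto_ceil_mul_rpow_inv_div {B d : ℝ} (hB : 0 ≤ B) (hd : 0 < d) :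
    Tendsto (fun N : ℕ => (⌈(B * N) ^ d⁻¹⌉₊ : ℝ) / (N : ℝ) ^ d⁻¹) atTop (𝓝 (B ^ d⁻¹)) := by
  have hlim := (tendsto_nat_ceil_mul_div_atTop (Real.rpow_nonneg hB d⁻¹)).comp
    ((tendsto_rpow_atTop (inv_pos.2 hd)).comp tendsto_natCast_atTop_atTop)
  refine hlim.congr fun N => ?_
  simp only [Function.comp_apply, Real.mul_rpow hB N.cast_nonneg]

theorem mul_add_div_rpow_one_add_div {N n κ ζ c d s : ℝ} (hN : 0 < N) (hn : 0 < n) (hκ : 0 ≤ κ) :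
    N * ((κ * n⁻¹) ^ (-s) * ζ + N * c) / N ^ (1 + s / d) =
      κ ^ (-s) * (n / N ^ d⁻¹) ^ s * ζ + N ^ (-(s / d - 1)) * c := by
  rw [Real.mul_rpow hκ (by positivity), Real.inv_rpow hn.le, ← Real.rpow_neg hn.le, neg_neg,
    Real.div_rpow hn.le (by positivity), ← Real.rpow_mul hN.le, inv_mul_eq_div,
    Real.rpow_add hN, neg_sub, Real.rpow_sub hN, Real.rpow_one]
  field_simp

variable {E X ι : Type*} [NormedAddCommGroup E] [InnerProductSpace ℝ E] [FiniteDimensional ℝ E]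
  [Nontrivial E] [MeasurableSpace E] [BorelSpace E] [MetricSpace X] [Fintype ι] {L : Submodule ℤ E}
  [DiscreteTopology L] [IsZLattice ℝ L]

theorem eventually_le_ncard_latticeSites {D : ι → Set E} (hD : ∀ i, IsCompact (D i))
    (hfrontier : ∀ i, volume (frontier (D i)) = 0) {B : ℝ} (hB : 0 < B)
    (hcovol : ZLattice.covolume L < B * ∑ i, volume.real (D i)) :
    ∀ᶠ N : ℕ in atTop,
      N ≤ (latticeSites L D (⌈(B * N) ^ (finrank ℝ E : ℝ)⁻¹⌉₊ : ℝ)⁻¹).ncard := by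
  have hd : 0 < finrank ℝ E := finrank_pos
  have hdensity : B⁻¹ < (∑ i, volume.real (D i)) / ZLattice.covolume L := by
    rwa [lt_div_iff₀ (ZLattice.covolume_pos L volume), inv_mul_lt_iff₀ hB]
  have hscale := tendsto_ceil_mul_rpow_inv_atTop hB (Nat.cast_pos (α := ℝ).2 hd)
  filter_upwards [hscale.eventually ((tendsto_ncard_latticeSites_div_pow L hD hfrontier).eventually
    (lt_mem_nhds hdensity)), hscale.eventually_gt_atTop 0] with N hN hpos
  set n := ⌈(B * N) ^ (finrank ℝ E : ℝ)⁻¹⌉₊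
  rw [lt_div_iff₀ (by positivity), inv_mul_lt_iff₀ hB] at hN
  have hceil : B * N ≤ (n : ℝ) ^ finrank ℝ E := by
    rw [← Real.rpow_natCast, ← Real.rpow_inv_le_iff_of_pos (by positivity) (by positivity)
      (by positivity)]
    exact Nat.le_ceil _
  exact_mod_cast le_of_mul_le_mul_left (hceil.trans hN.le) hB

namespace IsAntilipschitzPacking

variable {κ : ℝ} {D : ι → Set E} {F : ι → E → X}

theorem limsup_toReal_minEnergy_le_of_covolume_lt (h : IsAntilipschitzPacking κ D F) (hκ : 0 < κ)
    {s : ℝ} (hs : finrank ℝ E < s) {B : ℝ} (hB : 0 < B)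
    (hcovol : ZLattice.covolume L < B * ∑ i, volume.real (D i)) :
    limsup (fun N : ℕ => (minEnergy s X N).toReal / (N : ℝ) ^ (1 + s / finrank ℝ E)) atTop ≤
      κ ^ (-s) * B ^ (s / finrank ℝ E) * epsteinZeta L s := by
  obtain ⟨δ, hδ, hsep⟩ := h.exists_separation
  have hd : (0 : ℝ) < finrank ℝ E := Nat.cast_pos.2 finrank_pos
  set d := (finrank ℝ E : ℝ)
  have hs0 : 0 < s := hd.trans hs
  let n (N : ℕ) : ℕ := ⌈(B * N) ^ d⁻¹⌉₊
  have hsites : Tendsto (fun N : ℕ => κ ^ (-s) * (n N / (N : ℝ) ^ d⁻¹) ^ s * epsteinZeta L s)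
      atTop (𝓝 (κ ^ (-s) * B ^ (s / d) * epsteinZeta L s)) := by
    rw [div_eq_inv_mul, Real.rpow_mul hB.le]
    exact (((tendsto_ceil_mul_rpow_inv_div hB.le hd).rpow_const
      (.inr hs0.le)).const_mul _).mul_const _
  have hcross : Tendsto (fun N : ℕ => (N : ℝ) ^ (-(s / d - 1)) * δ ^ (-s)) atTop (𝓝 0) := by
    simpa using ((tendsto_rpow_neg_atTop (sub_pos.2 ((one_lt_div hd).2 hs))).comp
      tendsto_natCast_atTop_atTop).mul_const (δ ^ (-s))
  rw [← add_zero (κ ^ (-s) * B ^ (s / d) * epsteinZeta L s),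
    ← (hsites.add hcross).limsup_eq]
  refine limsup_le_limsup ?_ (IsCoboundedUnder.of_frequently_ge (a := 0)
    (Frequently.of_forall fun N => by positivity)) (hsites.add hcross).isBoundedUnder_le
  filter_upwards [eventually_le_ncard_latticeSites h.isCompact h.volume_frontier hB hcovol,
    (tendsto_ceil_mul_rpow_inv_atTop hB hd).eventually_gt_atTop 0, eventually_gt_atTop 0]
    with N hN hn hNpos
  have hbound := h.toReal_minEnergy_le hκ hδ hsep (inv_pos.2 (Nat.cast_pos.2 hn))
    (by rwa [ZLattice.rank ℝ L]) hN
  rw [← mul_add_div_rpow_one_add_div (by positivity) (Nat.cast_pos.2 hn) hκ.le]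
  gcongr

theorem limsup_toReal_minEnergy_le (h : IsAntilipschitzPacking κ D F) (hκ : 0 < κ)
    {s : ℝ} (hs : finrank ℝ E < s) (hvol : 0 < ∑ i, volume.real (D i)) :
    limsup (fun N : ℕ => (minEnergy s X N).toReal / (N : ℝ) ^ (1 + s / finrank ℝ E)) atTop ≤
      κ ^ (-s) * (ZLattice.covolume L / ∑ i, volume.real (D i)) ^ (s / finrank ℝ E) *
        epsteinZeta L s := by
  have hs0 : 0 ≤ s := (Nat.cast_nonneg _).trans hs.le
  set B₀ := ZLattice.covolume L / ∑ i, volume.real (D i)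
  have hlim : Tendsto (fun B : ℝ => κ ^ (-s) * B ^ (s / finrank ℝ E) * epsteinZeta L s) (𝓝[>] B₀)
      (𝓝 (κ ^ (-s) * B₀ ^ (s / finrank ℝ E) * epsteinZeta L s)) :=
    (((Real.continuousAt_rpow_const _ _ (.inr (by positivity))).tendsto.mono_left
      nhdsWithin_le_nhds).const_mul _).mul_const _
  refine ge_of_tendsto hlim ?_
  filter_upwards [self_mem_nhdsWithin] with B hB
  exact h.limsup_toReal_minEnergy_le_of_covolume_lt hκ hs
    ((div_pos (ZLattice.covolume_pos L volume) hvol).trans hB) ((div_lt_iff₀ hvol).1 hB)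

end IsAntilipschitzPacking

end Asymptotics

section SphereChart

variable {κ r θ φ θ' φ' : ℝ}

/-- The point of the unit sphere `S²` with longitude `θ` and latitude `φ`. -/
def spherePoint (θ φ : ℝ) : sphere (0 : EuclideanSpace ℝ (Fin 3)) 1 :=
  ⟨!₂[cos φ * cos θ, cos φ * sin θ, sin φ], by
    rw [mem_sphere_zero_iff_norm, EuclideanSpace.norm_eq, Real.sqrt_eq_one, Fin.sum_univ_three]
    simp only [Real.norm_eq_abs, sq_abs, Matrix.cons_val]
    linear_combination cos φ ^ 2 * sin_sq_add_cos_sq θ + sin_sq_add_cos_sq φ⟩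

theorem continuous_spherePoint : Continuous fun p : ℝ × ℝ => spherePoint p.1 p.2 := by
  unfold spherePoint
  fun_prop

theorem two_mul_sin_half_sq (x : ℝ) : (2 * sin (x / 2)) ^ 2 = 2 - 2 * cos x := by
  rw [mul_pow, Real.sin_sq_eq_half_sub, mul_div_cancel₀ x two_ne_zero]
  ring

theorem dist_spherePoint_sq (θ φ θ' φ' : ℝ) :
    dist (spherePoint θ φ) (spherePoint θ' φ') ^ 2 =
      (2 * sin ((φ - φ') / 2)) ^ 2 + cos φ * cos φ' * (2 * sin ((θ - θ') / 2)) ^ 2 := by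
  rw [two_mul_sin_half_sq, two_mul_sin_half_sq, Subtype.dist_eq, EuclideanSpace.dist_sq_eq,
    Fin.sum_univ_three, Real.cos_sub, Real.cos_sub]
  simp only [spherePoint, Real.dist_eq, sq_abs, Matrix.cons_val]
  linear_combination cos φ ^ 2 * sin_sq_add_cos_sq θ + sin_sq_add_cos_sq φ +
    cos φ' ^ 2 * sin_sq_add_cos_sq θ' + sin_sq_add_cos_sq φ'

theorem eq_and_eq_of_spherePoint_eq (hθ : θ ∈ Ico (-π) π) (hθ' : θ' ∈ Ico (-π) π)
    (hφ : φ ∈ Ioo (-(π / 2)) (π / 2)) (hφ' : φ' ∈ Ioo (-(π / 2)) (π / 2))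
    (h : spherePoint θ φ = spherePoint θ' φ') : θ = θ' ∧ φ = φ' := by
  have hcos : 0 < cos φ * cos φ' :=
    mul_pos (Real.cos_pos_of_mem_Ioo hφ) (Real.cos_pos_of_mem_Ioo hφ')
  have hdist := dist_spherePoint_sq θ φ θ' φ'
  rw [h, dist_self, zero_pow two_ne_zero, eq_comm,
    add_eq_zero_iff_of_nonneg (sq_nonneg _) (by positivity)] at hdist
  have hsin : sin ((φ - φ') / 2) = 0 ∧ sin ((θ - θ') / 2) = 0 := by
    simpa [hcos.ne'] using hdist
  have hpi := Real.pi_pos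
  rw [Real.sin_eq_zero_iff_of_lt_of_lt (by linarith [hφ.1, hφ'.2]) (by linarith [hφ.2, hφ'.1]),
    Real.sin_eq_zero_iff_of_lt_of_lt (by linarith [hθ.1, hθ'.2]) (by linarith [hθ.2, hθ'.1])]
    at hsin
  constructor <;> linarith [hsin.1, hsin.2]

theorem eventually_mul_abs_le_abs_two_mul_sin_half (hκ : κ < 1) :
    ∀ᶠ x in 𝓝 0, κ * |x| ≤ |2 * sin (x / 2)| := by
  have hderiv : HasDerivAt (fun x => 2 * sin (x / 2)) 1 0 := by
    convert! (((hasDerivAt_id (0 : ℝ)).div_const 2).sin.const_mul 2) using 1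
    simp
  filter_upwards [hderiv.isLittleO.def (sub_pos.2 hκ)] with x hx
  simp only [zero_div, Real.sin_zero, mul_zero, sub_zero, smul_eq_mul, mul_one,
    Real.norm_eq_abs] at hx
  linarith [abs_sub_abs_le_abs_sub x (2 * sin (x / 2)), abs_sub_comm x (2 * sin (x / 2))]

/-- The chart of `S²` around the point with longitude `θ` and latitude `φ` under which the real
axis runs along the parallel and the imaginary axis along the meridian. It is nearly isometric
when `r` is close to the radius `cos φ` of the parallel. -/
def sphereChart (r θ φ : ℝ) (z : ℂ) : sphere (0 : EuclideanSpace ℝ (Fin 3)) 1 :=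
  spherePoint (θ + z.re / r) (φ + z.im)

theorem continuous_sphereChart (r θ φ : ℝ) : Continuous (sphereChart r θ φ) :=
  continuous_spherePoint.comp (f := fun z : ℂ => (θ + z.re / r, φ + z.im)) (by fun_prop)

theorem mul_dist_le_dist_sphereChart (hκ : 0 ≤ κ) (hr : 0 < r) {z w : ℂ}
    (hz : r ≤ cos (φ + z.im)) (hw : r ≤ cos (φ + w.im))
    (hre : κ * |(z.re - w.re) / r| ≤ |2 * sin ((z.re - w.re) / r / 2)|)
    (him : κ * |z.im - w.im| ≤ |2 * sin ((z.im - w.im) / 2)|) :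
    κ * dist z w ≤ dist (sphereChart r θ φ z) (sphereChart r θ φ w) := by
  have hsq {x y : ℝ} (hxy : κ * |x| ≤ |y|) : (κ * x) ^ 2 ≤ y ^ 2 :=
    sq_le_sq.2 (by rwa [abs_mul, abs_of_nonneg hκ])
  have hcos : r * r ≤ cos (φ + z.im) * cos (φ + w.im) :=
    mul_le_mul hz hw hr.le (hr.le.trans hz)
  refine le_of_sq_le_sq ?_ dist_nonneg
  calc (κ * dist z w) ^ 2
      = (κ * (z.im - w.im)) ^ 2 + r * r * (κ * ((z.re - w.re) / r)) ^ 2 := by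
        rw [Complex.dist_eq_re_im, mul_pow, Real.sq_sqrt (by positivity)]
        field_simp
        ring
    _ ≤ (2 * sin ((z.im - w.im) / 2)) ^ 2 +
          cos (φ + z.im) * cos (φ + w.im) * (2 * sin ((z.re - w.re) / r / 2)) ^ 2 :=
        add_le_add (hsq him) (mul_le_mul hcos (hsq hre) (sq_nonneg _)
          ((mul_self_nonneg r).trans hcos))
    _ = dist (sphereChart r θ φ z) (sphereChart r θ φ w) ^ 2 := by
        rw [sphereChart, sphereChart, dist_spherePoint_sq, add_sub_add_left_eq_sub,
          add_sub_add_left_eq_sub, ← sub_div (z.re)]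

end SphereChart

section SphereGrid

variable {κ α a : ℝ} {n : ℕ}

theorem volume_real_Icc_reProdIm_Icc {a b c d : ℝ} (hab : a ≤ b) (hcd : c ≤ d) :
    volume.real (Icc a b ×ℂ Icc c d) = (b - a) * (d - c) := by
  change volume.real (Complex.measurableEquivRealProd ⁻¹' (Icc a b ×ˢ Icc c d)) = _
  rw [Complex.volume_preserving_equiv_real_prod.measureReal_preimage
    (measurableSet_Icc.prod measurableSet_Icc).nullMeasurableSet, Measure.volume_eq_prod,
    measureReal_prod_prod, Real.volume_real_Icc_of_le hab, Real.volume_real_Icc_of_le hcd]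

theorem volume_frontier_Icc_reProdIm_Icc (a b c d : ℝ) :
    volume (frontier (Icc a b ×ℂ Icc c d)) = 0 :=
  (((convex_Icc a b).linear_preimage Complex.reLm).inter
    ((convex_Icc c d).linear_preimage Complex.imLm)).addHaar_frontier volume

/-- The `i`-th of the equidistant points that cut the interval `[-a, a]` into `n` parts. -/
def gridNode (a : ℝ) (n i : ℕ) : ℝ :=
  -a + i * (2 * a / n)

theorem gridNode_add_mem_Ico (ha : 0 ≤ a) (i : Fin n) {u : ℝ} (hu : u ∈ Ico 0 (2 * a / n)) :
    gridNode a n i + u ∈ Ico (-a) a := by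
  have hn : (n : ℝ) ≠ 0 := Nat.cast_ne_zero.2 i.pos.ne'
  have hle : (i + 1 : ℝ) * (2 * a / n) ≤ n * (2 * a / n) := by
    gcongr
    exact_mod_cast i.2
  have hnonneg : 0 ≤ (i : ℝ) * (2 * a / n) := by positivity
  rw [mul_div_cancel₀ _ hn] at hle
  constructor <;> unfold gridNode <;> linarith [hu.1, hu.2]

theorem eq_of_gridNode_add_eq {i j : ℕ} {u v : ℝ} (hu : u ∈ Ico 0 (2 * a / n))
    (hv : v ∈ Ico 0 (2 * a / n)) (heq : gridNode a n i + u = gridNode a n j + v) : i = j := by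
  have hstep : 0 < 2 * a / n := hu.1.trans_lt hu.2
  unfold gridNode at heq
  have hij : (i : ℝ) < j + 1 := by nlinarith [hu.1, hv.2]
  have hji : (j : ℝ) < i + 1 := by nlinarith [hv.1, hu.2]
  norm_cast at hij hji
  omega

/-- A lower bound `κ cos φ` for the radii of the parallels in the `i`-th of the `n` strips of equal
height into which the band of latitudes `[-α, α]` is cut, where `φ` is the middle latitude of the
strip. -/
def stripRadius (κ α : ℝ) (n i : ℕ) : ℝ :=
  κ * cos (gridNode α n i + α / n)

theorem cos_le_cos_of_mem_Icc_neg {φ : ℝ} (hα : α ≤ π) (hφ : φ ∈ Icc (-α) α) : cos α ≤ cos φ := by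
  rw [← Real.cos_abs φ]
  exact Real.cos_le_cos_of_nonneg_of_le_pi (abs_nonneg _) hα (abs_le.2 hφ)

theorem cos_le_cos_gridNode_add (hα : α ∈ Ioo 0 (π / 2)) (i : Fin n) {u : ℝ}
    (hu : u ∈ Ico 0 (2 * α / n)) : cos α ≤ cos (gridNode α n i + u) :=
  cos_le_cos_of_mem_Icc_neg (by linarith [hα.2, Real.pi_pos])
    (Ico_subset_Icc_self (gridNode_add_mem_Ico hα.1.le i hu))

theorem div_mem_Ico_two_mul_div (hα : 0 < α) (hn : 0 < n) : α / n ∈ Ico 0 (2 * α / n) :=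
  ⟨by positivity, by gcongr; linarith⟩

theorem stripRadius_pos (hκ : 0 < κ) (hα : α ∈ Ioo 0 (π / 2)) (i : Fin n) :
    0 < stripRadius κ α n i :=
  mul_pos hκ ((Real.cos_pos_of_mem_Ioo ⟨by linarith [hα.1, hα.2], hα.2⟩).trans_le
    (cos_le_cos_gridNode_add hα i (div_mem_Ico_two_mul_div hα.1 i.pos)))

theorem stripRadius_le_cos (hκ : κ ≤ 1) (hα : α ∈ Ioo 0 (π / 2))
    (hfine : α / n ≤ (1 - κ) * cos α) (i : Fin n) {u : ℝ} (hu : u ∈ Ico 0 (2 * α / n)) :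
    stripRadius κ α n i ≤ cos (gridNode α n i + u) := by
  have hmid := cos_le_cos_gridNode_add hα i (div_mem_Ico_two_mul_div hα.1 i.pos)
  have hlip : cos (gridNode α n i + α / n) - cos (gridNode α n i + u) ≤ α / n := by
    refine (le_abs_self _).trans ((Real.abs_cos_sub_cos_le _ _).trans ?_)
    have hdouble : 2 * α / n = α / n + α / n := by ring
    rw [add_sub_add_left_eq_sub, abs_le]
    constructor <;> linarith [hu.1, hu.2]
  have hshrink := mul_le_mul_of_nonneg_left hmid (sub_nonneg.2 hκ)
  unfold stripRadius
  linarith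

/-- The rectangles parametrising the cells of the grid on `S²` formed by `n` strips of equal height
in the band of latitudes `[-α, α]` and `n` equal sectors, each cell being shrunk by the factor `κ`
in both directions. -/
def gridDomain (κ α : ℝ) (n : ℕ) (p : Fin n × Fin n) : Set ℂ :=
  Icc 0 (κ * (2 * π / n) * stripRadius κ α n p.1) ×ℂ Icc 0 (κ * (2 * α / n))

/-- The charts parametrising the cells of the grid on `S²` formed by `n` strips of equal height in
the band of latitudes `[-α, α]` and `n` equal sectors. -/
def gridChart (κ α : ℝ) (n : ℕ) (p : Fin n × Fin n) :
    ℂ → sphere (0 : EuclideanSpace ℝ (Fin 3)) 1 :=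
  sphereChart (stripRadius κ α n p.1) (gridNode π n p.2) (gridNode α n p.1)

theorem re_div_mem_of_mem_gridDomain (hκ : κ ∈ Ioo 0 1) (hα : α ∈ Ioo 0 (π / 2))
    {p : Fin n × Fin n} {z : ℂ} (hz : z ∈ gridDomain κ α n p) :
    z.re / stripRadius κ α n p.1 ∈ Ico 0 (2 * π / n) := by
  have hr := stripRadius_pos hκ.1 hα p.1
  have hn : (0 : ℝ) < n := Nat.cast_pos.2 p.1.pos
  have hstep : 0 < 2 * π / n := by positivity
  exact ⟨div_nonneg hz.1.1 hr.le,
    ((div_le_iff₀ hr).2 hz.1.2).trans_lt (mul_lt_of_lt_one_left hstep hκ.2)⟩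

theorem im_mem_of_mem_gridDomain (hκ : κ < 1) (hα : 0 < α) {p : Fin n × Fin n} {z : ℂ}
    (hz : z ∈ gridDomain κ α n p) : z.im ∈ Ico 0 (2 * α / n) := by
  have hn : (0 : ℝ) < n := Nat.cast_pos.2 p.1.pos
  exact ⟨hz.2.1, hz.2.2.trans_lt (mul_lt_of_lt_one_left (by positivity) hκ)⟩

theorem pairwise_disjoint_image_gridChart (hκ : κ ∈ Ioo 0 1) (hα : α ∈ Ioo 0 (π / 2)) :
    Pairwise fun p q : Fin n × Fin n =>
      Disjoint (gridChart κ α n p '' gridDomain κ α n p)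
        (gridChart κ α n q '' gridDomain κ α n q) := by
  refine fun p q hpq => disjoint_left.2 ?_
  rintro _ ⟨z, hz, rfl⟩ ⟨w, hw, hwz⟩
  have hband : Ico (-α) α ⊆ Ioo (-(π / 2)) (π / 2) :=
    Ico_subset_Ioo_left (neg_lt_neg hα.2) |>.trans (Ioo_subset_Ioo_right hα.2.le)
  have hzre := re_div_mem_of_mem_gridDomain hκ hα hz
  have hwre := re_div_mem_of_mem_gridDomain hκ hα hw
  have hzim := im_mem_of_mem_gridDomain hκ.2 hα.1 hz
  have hwim := im_mem_of_mem_gridDomain hκ.2 hα.1 hw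
  obtain ⟨hlong, hlat⟩ := eq_and_eq_of_spherePoint_eq
    (gridNode_add_mem_Ico Real.pi_pos.le q.2 hwre) (gridNode_add_mem_Ico Real.pi_pos.le p.2 hzre)
    (hband (gridNode_add_mem_Ico hα.1.le q.1 hwim))
    (hband (gridNode_add_mem_Ico hα.1.le p.1 hzim)) hwz
  exact hpq (Prod.ext (Fin.ext (eq_of_gridNode_add_eq hwim hzim hlat).symm)
    (Fin.ext (eq_of_gridNode_add_eq hwre hzre hlong).symm))

theorem isAntilipschitzPacking_gridChart (hκ : κ ∈ Ioo 0 1) (hα : α ∈ Ioo 0 (π / 2))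
    (hchord : ∀ x, |x| < 2 * π / n → κ * |x| ≤ |2 * sin (x / 2)|)
    (hfine : α / n ≤ (1 - κ) * cos α) :
    IsAntilipschitzPacking κ (gridDomain κ α n) (gridChart κ α n) where
  isCompact _ := isCompact_Icc.reProdIm isCompact_Icc
  volume_frontier _ := volume_frontier_Icc_reProdIm_Icc _ _ _ _
  continuousOn _ := (continuous_sphereChart _ _ _).continuousOn
  disjoint := pairwise_disjoint_image_gridChart hκ hα
  mul_dist_le p z hz w hw := by
    have hchord' {x y : ℝ} (hx : x ∈ Ico 0 (2 * π / n)) (hy : y ∈ Ico 0 (2 * π / n)) :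
        κ * |x - y| ≤ |2 * sin ((x - y) / 2)| :=
      hchord _ (abs_sub_lt_of_nonneg_of_lt hx.1 hx.2 hy.1 hy.2)
    have hsub : Ico 0 (2 * α / n) ⊆ Ico 0 (2 * π / n) := by
      have hαπ : α ≤ π := by linarith [hα.2, Real.pi_pos]
      exact Ico_subset_Ico_right (by gcongr)
    have hzim := im_mem_of_mem_gridDomain hκ.2 hα.1 hz
    have hwim := im_mem_of_mem_gridDomain hκ.2 hα.1 hw
    refine mul_dist_le_dist_sphereChart hκ.1.le (stripRadius_pos hκ.1 hα p.1)
      (stripRadius_le_cos hκ.2.le hα hfine p.1 hzim)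
      (stripRadius_le_cos hκ.2.le hα hfine p.1 hwim) ?_ (hchord' (hsub hzim) (hsub hwim))
    rw [sub_div]
    exact hchord' (re_div_mem_of_mem_gridDomain hκ hα hz) (re_div_mem_of_mem_gridDomain hκ hα hw)

theorem sin_gridNode_succ_sub_le (hα : 0 ≤ α) {i : ℕ} (hcos : 0 ≤ cos (gridNode α n i + α / n)) :
    sin (gridNode α n (i + 1)) - sin (gridNode α n i) ≤
      2 * α / n * cos (gridNode α n i + α / n) := by
  have hhalf : (gridNode α n (i + 1) - gridNode α n i) / 2 = α / n := by
    simp only [gridNode, Nat.cast_succ]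
    ring
  have hmid : (gridNode α n (i + 1) + gridNode α n i) / 2 = gridNode α n i + α / n := by
    linarith
  rw [Real.sin_sub_sin, hhalf, hmid, mul_div_assoc]
  gcongr
  exact Real.sin_le (by positivity)

theorem two_mul_sin_le_sum_cos_gridNode (hα : α ∈ Ioo 0 (π / 2)) (hn : n ≠ 0) :
    2 * sin α ≤ ∑ i : Fin n, 2 * α / n * cos (gridNode α n i + α / n) := by
  have hlast : gridNode α n n = α := by
    unfold gridNode
    field_simp
    ring
  calc 2 * sin α = ∑ i : Fin n, (sin (gridNode α n (i + 1)) - sin (gridNode α n i)) := by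
        rw [Fin.sum_univ_eq_sum_range
          (fun i => sin (gridNode α n (i + 1)) - sin (gridNode α n i)),
          Finset.sum_range_sub fun i => sin (gridNode α n i), hlast]
        simp only [gridNode, Nat.cast_zero, zero_mul, add_zero, Real.sin_neg]
        ring
    _ ≤ _ := Finset.sum_le_sum fun i _ => sin_gridNode_succ_sub_le hα.1.le
        ((Real.cos_pos_of_mem_Ioo ⟨by linarith [hα.1, hα.2], hα.2⟩).le.trans
          (cos_le_cos_gridNode_add hα i (div_mem_Ico_two_mul_div hα.1 i.pos)))

theorem four_mul_pi_mul_le_sum_volume_gridDomain (hκ : 0 < κ) (hα : α ∈ Ioo 0 (π / 2))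
    (hn : n ≠ 0) : 4 * π * κ ^ 3 * sin α ≤ ∑ p, volume.real (gridDomain κ α n p) := by
  have hα0 := hα.1
  have hcell (p : Fin n × Fin n) : volume.real (gridDomain κ α n p) =
      2 * π * κ ^ 3 / n * (2 * α / n * cos (gridNode α n p.1 + α / n)) := by
    have hr := stripRadius_pos hκ hα p.1
    rw [gridDomain, volume_real_Icc_reProdIm_Icc (by positivity) (by positivity), stripRadius]
    ring
  calc 4 * π * κ ^ 3 * sin α = 2 * π * κ ^ 3 * (2 * sin α) := by ring
    _ ≤ 2 * π * κ ^ 3 * ∑ i : Fin n, 2 * α / n * cos (gridNode α n i + α / n) := by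
        gcongr
        exact two_mul_sin_le_sum_cos_gridNode hα hn
    _ = ∑ p, volume.real (gridDomain κ α n p) := by
        simp_rw [hcell, Fintype.sum_prod_type, Finset.sum_const, Finset.card_univ,
          Fintype.card_fin, nsmul_eq_mul, Finset.mul_sum]
        refine Finset.sum_congr rfl fun i _ => ?_
        field_simp

theorem exists_isAntilipschitzPacking_sphere (hκ : κ ∈ Ioo 0 1) :
    ∃ (n : ℕ) (D : Fin n × Fin n → Set ℂ)
      (F : Fin n × Fin n → ℂ → sphere (0 : EuclideanSpace ℝ (Fin 3)) 1),
      IsAntilipschitzPacking κ D F ∧ 4 * π * κ ^ 4 ≤ ∑ p, volume.real (D p) := by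
  have hα : arcsin κ ∈ Ioo 0 (π / 2) :=
    ⟨Real.arcsin_pos.2 hκ.1, Real.arcsin_lt_pi_div_two.2 hκ.2⟩
  have hsin : sin (arcsin κ) = κ := Real.sin_arcsin (by linarith [hκ.1]) hκ.2.le
  have hcos : 0 < cos (arcsin κ) :=
    Real.cos_pos_of_mem_Ioo ⟨by linarith [hα.1, Real.pi_pos], hα.2⟩
  obtain ⟨e, he, hchord⟩ :=
    Metric.eventually_nhds_iff.1 (eventually_mul_abs_le_abs_two_mul_sin_half hκ.2)
  obtain ⟨n, hwidth, hfine, hn⟩ :=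
    (((tendsto_const_div_atTop_nhds_zero_nat (2 * π)).eventually_lt_const he).and
      (((tendsto_const_div_atTop_nhds_zero_nat (arcsin κ)).eventually_lt_const
        (mul_pos (sub_pos.2 hκ.2) hcos)).and (eventually_ne_atTop 0))).exists
  have harea := four_mul_pi_mul_le_sum_volume_gridDomain hκ.1 hα hn
  rw [hsin, mul_assoc, ← pow_succ] at harea
  exact ⟨n, _, _, isAntilipschitzPacking_gridChart hκ hα
    (fun x hx => hchord (by simpa using hx.trans hwidth)) hfine.le, harea⟩

end SphereGrid

section HexagonalLattice

theorem covolume_lattice_periodPair (P : PeriodPair) :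
    ZLattice.covolume P.lattice = |P.ω₁.re * P.ω₂.im - P.ω₂.re * P.ω₁.im| := by
  rw [ZLattice.covolume_eq_det_mul_measureReal _ volume P.latticeBasis
    Complex.orthonormalBasisOneI.toBasis,
    measureReal_congr (ZSpan.fundamentalDomain_ae_parallelepiped _ volume), measureReal_def,
    OrthonormalBasis.coe_toBasis, OrthonormalBasis.volume_parallelepiped]
  simp [Module.Basis.det_apply, Matrix.det_fin_two, Module.Basis.toMatrix_apply]

/-- The periods `1` and `e^{iπ/3}` of the hexagonal lattice. -/
def hexagonalPair : PeriodPair where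
  ω₁ := 1
  ω₂ := ⟨1 / 2, √3 / 2⟩
  indep := by
    refine LinearIndependent.pair_iff.2 fun a b hab => ?_
    have hb : b = 0 := by simpa using congrArg Complex.im hab
    exact ⟨by simpa [hb] using congrArg Complex.re hab, hb⟩

theorem norm_hexagonalPair_sq (p : ℤ × ℤ) :
    ‖hexagonalPair.latticeEquivProd.symm p‖ ^ 2 =
      ((p.1 ^ 2 + p.1 * p.2 + p.2 ^ 2 : ℤ) : ℝ) := by
  rw [Submodule.coe_norm, PeriodPair.latticeEquiv_symm_apply, Complex.sq_norm, Complex.normSq_apply]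
  simp only [hexagonalPair, Complex.add_re, Complex.add_im, Complex.mul_re, Complex.mul_im,
    Complex.intCast_re, Complex.intCast_im, Complex.one_re, Complex.one_im]
  push_cast
  linear_combination (p.2 ^ 2 / 4 : ℝ) * Real.sq_sqrt (zero_le_three (α := ℝ))

theorem covolume_hexagonalPair : ZLattice.covolume hexagonalPair.lattice = √3 / 2 := by
  rw [covolume_lattice_periodPair]
  simp only [hexagonalPair, Complex.one_re, Complex.one_im, one_mul, mul_zero, sub_zero]
  exact abs_of_nonneg (by positivity)

theorem epsteinZeta_hexagonalPair {s : ℝ} (hs : s ≠ 0) :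
    epsteinZeta hexagonalPair.lattice s =
      ∑' p : {p : ℤ × ℤ // p ≠ 0},
        ((p.1.1 ^ 2 + p.1.1 * p.1.2 + p.1.2 ^ 2 : ℤ) : ℝ) ^ (-(s / 2)) := by
  rw [epsteinZeta, ← hexagonalPair.latticeEquivProd.symm.toEquiv.tsum_eq,
    ← tsum_subtype_eq_of_support_subset (s := {p : ℤ × ℤ | p ≠ 0})]
  · refine tsum_congr fun p => ?_
    rw [← norm_hexagonalPair_sq, ← Real.rpow_natCast_mul (norm_nonneg _)]
    simp [mul_div_cancel₀]
  · rintro _ hp rfl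
    exact hp (by simp [Real.zero_rpow (neg_ne_zero.2 hs)])

end HexagonalLattice

theorem kuijlaars_saff_upper_bound_general (L : Submodule ℤ ℂ) [DiscreteTopology L] [IsZLattice ℝ L]
    (s : ℝ) (hs : 2 < s) :
    limsup (fun N : ℕ => (minRieszEnergy s 2 N).toReal / (N : ℝ) ^ (1 + s / 2)) atTop ≤
      (ZLattice.covolume L / (4 * π)) ^ (s / 2) * epsteinZeta L s := by
  have hlim : Tendsto (fun κ : ℝ => κ ^ (-s) *
      (ZLattice.covolume L / (4 * π * κ ^ 4)) ^ (s / 2) * epsteinZeta L s) (𝓝[<] 1)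
      (𝓝 ((ZLattice.covolume L / (4 * π)) ^ (s / 2) * epsteinZeta L s)) := by
    have hcont : ContinuousAt (fun κ : ℝ => κ ^ (-s) *
        (ZLattice.covolume L / (4 * π * κ ^ 4)) ^ (s / 2) * epsteinZeta L s) 1 := by
      fun_prop (disch := first | positivity | exact .inl one_ne_zero | exact .inr (by linarith))
    simpa using hcont.tendsto.mono_left nhdsWithin_le_nhds
  refine ge_of_tendsto hlim ?_
  filter_upwards [Ioo_mem_nhdsLT zero_lt_one] with κ hκ
  obtain ⟨n, D, F, hF, harea⟩ := exists_isAntilipschitzPacking_sphere hκ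
  have hvol : 0 < 4 * π * κ ^ 4 := by have := hκ.1; positivity
  have hle := hF.limsup_toReal_minEnergy_le (L := L) hκ.1
    (by rwa [Complex.finrank_real_complex]) (hvol.trans_le harea)
  simp only [Complex.finrank_real_complex, Nat.cast_ofNat] at hle
  simp_rw [minRieszEnergy_eq_minEnergy]
  have hκs := Real.rpow_nonneg hκ.1.le (-s)
  have hzeta := epsteinZeta_nonneg L s
  have hcovol := (ZLattice.covolume_pos L volume).le
  exact hle.trans (by gcongr)

/-- **Kuijlaars–Saff upper bound.** For `s > 2`,
`limsup_N E_s(S²;N)/N^{1+s/2} ≤ (√3/(8π))^{s/2} · ζ_Λ(s)`, where `ζ_Λ` is the zeta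
function of the hexagonal lattice. -/
theorem kuijlaars_saff_upper_bound (s : ℝ) (hs : 2 < s) :
    Filter.limsup
        (fun N : ℕ => (minRieszEnergy s 2 N).toReal / (N : ℝ) ^ ((1 : ℝ) + s / 2)) atTop
      ≤ (Real.sqrt 3 / (8 * π)) ^ (s / 2) *
        ∑' p : {p : ℤ × ℤ // p ≠ 0},
          ((p.1.1 ^ 2 + p.1.1 * p.1.2 + p.1.2 ^ 2 : ℤ) : ℝ) ^ (-(s / 2)) := by
  rw [← epsteinZeta_hexagonalPair (by linarith)]
  convert! kuijlaars_saff_upper_bound_general hexagonalPair.lattice s hs using 3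
  rw [covolume_hexagonalPair]
  ring
end
end

section
/- Factorization of the hexagonal lattice zeta function: for every real s > 2 (more generally complex s with Re s > 2), ∑_{(m,n) ∈ Z² \ {(0,0)}} (m² + mn + n²)^{−s/2} = 6 · ζ(s/2) · L(χ, s/2), where ζ is the Riemann zeta function and χ is the unique nontrivial (quadratic) Dirichlet character modulo 3, so that L(χ, w) = ∑_{n≥1} χ(n) n^{−w} = 1 − 2^{−w} + 4^{−w} − 5^{−w} + 7^{−w} − ⋯. -/
open MeasureTheory Metric Real Filter
open scoped BigOperators ENNReal NNReal Topology

noncomputable section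

/-!
The form `m² + m n + n²` is the norm form of the Eisenstein integers, so the lattice sum is the
Dirichlet series of `r(n)`, the number of elements of norm `n`. Count the elements of norm `p n`,
for `p` prime. If `p` is the norm of some `w`, each of them is divisible by `w` or by its conjugate;
for `p ≡ 1 mod 3` both divide exactly when `p` does, and for `p = 3` the two are associated. If
`p ≡ 2 mod 3`, all of them are divisible by `p`. With `r(n / p) = 0` when `p ∤ n`, this gives
`r(p n) + χ(p) r(n / p) = (1 + χ(p)) r(n)` in each case. The divisor sum `∑_{d ∣ n} χ(d)` obeys
the same recursion, which determines a function from its value at `1`. As there are six units,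
`r(n) = 6 ∑_{d ∣ n} χ(d)`, and the Dirichlet series of the divisor sum is `ζ(s) L(χ, s)`.
-/

namespace HexagonalLattice

section NormDivisibility

variable {R : Type*} [CommRing R] {a b : R}

lemma im_star_mul_mul_im_mul (w z : QuadraticAlgebra R a b) :
    (star w * z).im * (w * z).im = w.norm * z.im ^ 2 - w.im ^ 2 * z.norm := by
  simp only [QuadraticAlgebra.im_mul, QuadraticAlgebra.re_star, QuadraticAlgebra.im_star,
    QuadraticAlgebra.norm_def]
  ring

lemma trace_sq_eq (z : QuadraticAlgebra R a b) :
    z.trace ^ 2 = 4 * z.norm + (b ^ 2 + 4 * a) * z.im ^ 2 := by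
  simp only [QuadraticAlgebra.trace_def, QuadraticAlgebra.norm_def]
  ring

lemma algebraMap_dvd_of_dvd_norm_of_dvd_im {p : R} (hp : Prime p) {z : QuadraticAlgebra R a b}
    (hz : p ∣ z.norm) (him : p ∣ z.im) : algebraMap R _ p ∣ z := by
  have hre : p ∣ z.re ^ 2 := by
    have h := dvd_add hz (him.mul_left (a * z.im - b * z.re))
    rw [QuadraticAlgebra.norm_def] at h
    convert h using 1
    ring
  exact QuadraticAlgebra.algebraMap_dvd_iff.2 ⟨hp.dvd_of_dvd_pow hre, him⟩

variable [NoZeroDivisors R]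

lemma isLeftRegular_of_norm_ne_zero {w : QuadraticAlgebra R a b} (hw : w.norm ≠ 0) :
    IsLeftRegular w := by
  have hmem := QuadraticAlgebra.norm_mem_nonZeroDivisors_iff.1 (mem_nonZeroDivisors_of_ne_zero hw)
  exact (isRegular_iff_mem_nonZeroDivisors.2 hmem).left

lemma algebraMap_norm_dvd_star_mul_iff {w z : QuadraticAlgebra R a b} (hw : w.norm ≠ 0) :
    algebraMap R _ w.norm ∣ star w * z ↔ w ∣ z := by
  rw [QuadraticAlgebra.algebraMap_norm_eq_mul_star, mul_comm w]
  refine ⟨fun ⟨u, hu⟩ ↦ ⟨u, ?_⟩, mul_dvd_mul_left _⟩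
  rw [mul_assoc] at hu
  exact isLeftRegular_of_norm_ne_zero (by simpa using hw) hu

lemma dvd_or_star_dvd_of_norm_dvd_norm {w z : QuadraticAlgebra R a b} (hw : Prime w.norm)
    (hz : w.norm ∣ z.norm) : w ∣ z ∨ star w ∣ z := by
  have him : w.norm ∣ (star w * z).im * (w * z).im := by
    rw [im_star_mul_mul_im_mul]
    exact dvd_sub (dvd_mul_right _ _) (hz.mul_left _)
  rcases hw.dvd_or_dvd him with h | h
  · refine .inl <| (algebraMap_norm_dvd_star_mul_iff hw.ne_zero).1 <|
      algebraMap_dvd_of_dvd_norm_of_dvd_im hw ?_ h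
    simp
  · refine .inr <| (algebraMap_norm_dvd_star_mul_iff (by simpa using hw.ne_zero)).1 ?_
    rw [star_star, QuadraticAlgebra.norm_star]
    exact algebraMap_dvd_of_dvd_norm_of_dvd_im hw (by simp) h

lemma not_norm_dvd_im {w : QuadraticAlgebra R a b} (hw : Prime w.norm) : ¬ w.norm ∣ w.im := by
  intro him
  have hdvd := map_dvd QuadraticAlgebra.norm
    (algebraMap_dvd_of_dvd_norm_of_dvd_im hw dvd_rfl him)
  rw [QuadraticAlgebra.norm_algebraMap] at hdvd
  have hle := (pow_dvd_pow_iff hw.ne_zero hw.not_isUnit).1 (hdvd.trans (pow_one _).symm.dvd)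
  omega

lemma not_norm_dvd_trace {w : QuadraticAlgebra R a b} (hw : Prime w.norm)
    (hdisc : ¬ w.norm ∣ b ^ 2 + 4 * a) : ¬ w.norm ∣ w.trace := by
  intro htr
  have hdvd : w.norm ∣ (b ^ 2 + 4 * a) * w.im ^ 2 := by
    rw [← dvd_add_right (dvd_mul_left w.norm 4), ← trace_sq_eq]
    exact dvd_pow htr two_ne_zero
  rcases hw.dvd_or_dvd hdvd with h | h
  · exact hdisc h
  · exact not_norm_dvd_im hw (hw.dvd_of_dvd_pow h)

lemma algebraMap_norm_dvd_iff {w z : QuadraticAlgebra R a b} (hw : Prime w.norm)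
    (hdisc : ¬ w.norm ∣ b ^ 2 + 4 * a) : algebraMap R _ w.norm ∣ z ↔ w ∣ z ∧ star w ∣ z := by
  have hnorm := QuadraticAlgebra.algebraMap_norm_eq_mul_star w
  refine ⟨fun h ↦ ⟨(Dvd.intro _ hnorm.symm).trans h, (Dvd.intro_left _ hnorm.symm).trans h⟩, ?_⟩
  rintro ⟨hwz, hswz⟩
  have htr : algebraMap R _ w.norm ∣ algebraMap R _ w.trace * z := by
    rw [QuadraticAlgebra.algebraMap_trace_eq_add_star, add_mul, hnorm]
    exact dvd_add (mul_dvd_mul_left _ hswz) (mul_comm w (star w) ▸ mul_dvd_mul_left _ hwz)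
  simp only [QuadraticAlgebra.algebraMap_dvd_iff, QuadraticAlgebra.re_mul,
    QuadraticAlgebra.im_mul, QuadraticAlgebra.algebraMap_re, QuadraticAlgebra.algebraMap_im,
    mul_zero, zero_mul, add_zero] at htr
  have htrace := not_norm_dvd_trace hw hdisc
  exact QuadraticAlgebra.algebraMap_dvd_iff.2
    ⟨(hw.dvd_or_dvd htr.1).resolve_left htrace, (hw.dvd_or_dvd htr.2).resolve_left htrace⟩

lemma encard_norm_eq_and_dvd {w : QuadraticAlgebra R a b} (hw : w.norm ≠ 0) (m : R) :
    {z : QuadraticAlgebra R a b | z.norm = m ∧ w ∣ z}.encard =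
      {z : QuadraticAlgebra R a b | w.norm * z.norm = m}.encard := by
  have himage : {z : QuadraticAlgebra R a b | z.norm = m ∧ w ∣ z} =
      (w * ·) '' {z | w.norm * z.norm = m} := by
    ext z
    constructor
    · rintro ⟨hz, u, rfl⟩
      exact ⟨u, (map_mul _ _ _).symm.trans hz, rfl⟩
    · rintro ⟨u, hu, rfl⟩
      exact ⟨(map_mul _ _ _).trans hu, dvd_mul_right _ _⟩
  rw [himage]
  exact Function.Injective.encard_image (isLeftRegular_of_norm_ne_zero hw) _

lemma encard_norm_eq_norm_mul_and_dvd {w : QuadraticAlgebra R a b} (hw : w.norm ≠ 0) (n : R) :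
    {z : QuadraticAlgebra R a b | z.norm = w.norm * n ∧ w ∣ z}.encard =
      {z : QuadraticAlgebra R a b | z.norm = n}.encard := by
  simp only [encard_norm_eq_and_dvd hw, mul_right_inj' hw]

lemma encard_norm_eq_mul_and_algebraMap_dvd {p : R} (hp : p ≠ 0) (n : R) :
    {z : QuadraticAlgebra R a b | z.norm = p * n ∧ algebraMap R _ p ∣ z}.encard =
      {z : QuadraticAlgebra R a b | p * z.norm = n}.encard := by
  have hnorm : (algebraMap R (QuadraticAlgebra R a b) p).norm ≠ 0 := by simpa using hp
  simp only [encard_norm_eq_and_dvd hnorm, QuadraticAlgebra.norm_algebraMap, sq, mul_assoc,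
    mul_right_inj' hp]

lemma encard_norm_eq_norm_mul_of_ramified {w : QuadraticAlgebra R a b} (hw : Prime w.norm)
    (hstar : w ∣ star w) (n : R) :
    {z : QuadraticAlgebra R a b | z.norm = w.norm * n}.encard =
      {z : QuadraticAlgebra R a b | z.norm = n}.encard := by
  rw [← encard_norm_eq_norm_mul_and_dvd hw.ne_zero n]
  congr 1
  ext z
  simp only [Set.mem_ofPred_eq, iff_self_and]
  exact fun hz ↦ (dvd_or_star_dvd_of_norm_dvd_norm hw (Dvd.intro _ hz.symm)).elim id hstar.trans

lemma encard_norm_eq_norm_mul_of_split {w : QuadraticAlgebra R a b} (hw : Prime w.norm)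
    (hdisc : ¬ w.norm ∣ b ^ 2 + 4 * a) (n : R) :
    {z : QuadraticAlgebra R a b | z.norm = w.norm * n}.encard +
        {z : QuadraticAlgebra R a b | z.norm = w.norm * n ∧ algebraMap R _ w.norm ∣ z}.encard =
      2 * {z : QuadraticAlgebra R a b | z.norm = n}.encard := by
  have hunion : {z : QuadraticAlgebra R a b | z.norm = w.norm * n} =
      {z | z.norm = w.norm * n ∧ w ∣ z} ∪ {z | z.norm = w.norm * n ∧ star w ∣ z} := by
    ext z
    simp only [Set.mem_union, Set.mem_ofPred_eq, ← and_or_left, iff_self_and]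
    exact fun hz ↦ dvd_or_star_dvd_of_norm_dvd_norm hw (Dvd.intro _ hz.symm)
  have hinter : {z : QuadraticAlgebra R a b | z.norm = w.norm * n ∧ algebraMap R _ w.norm ∣ z} =
      {z | z.norm = w.norm * n ∧ w ∣ z} ∩ {z | z.norm = w.norm * n ∧ star w ∣ z} := by
    ext z
    simp only [Set.mem_inter_iff, Set.mem_ofPred_eq, algebraMap_norm_dvd_iff hw hdisc]
    tauto
  have hstar := encard_norm_eq_norm_mul_and_dvd (w := star w) (by simpa using hw.ne_zero) n
  rw [QuadraticAlgebra.norm_star] at hstar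
  rw [hunion, hinter, Set.encard_union_add_encard_inter, hstar,
    encard_norm_eq_norm_mul_and_dvd hw.ne_zero, two_mul]

end NormDivisibility

section ResidueFields

lemma exists_root_of_dvd_norm {p : ℕ} [Fact p.Prime] {a b : ℤ} {z : QuadraticAlgebra ℤ a b}
    (hz : (p : ℤ) ∣ z.norm) (him : ¬ (p : ℤ) ∣ z.im) : ∃ t : ZMod p, t ^ 2 + b * t = a := by
  rw [← ZMod.intCast_zmod_eq_zero_iff_dvd] at hz him
  rw [QuadraticAlgebra.norm_def] at hz
  push_cast at hz
  refine ⟨z.re / z.im, ?_⟩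
  field_simp
  linear_combination hz

lemma algebraMap_dvd_of_dvd_norm_of_inert {p : ℕ} [Fact p.Prime] {a b : ℤ}
    (hroot : ∀ t : ZMod p, t ^ 2 + b * t ≠ a) {z : QuadraticAlgebra ℤ a b}
    (hz : (p : ℤ) ∣ z.norm) : algebraMap ℤ _ (p : ℤ) ∣ z := by
  have hp : Prime (p : ℤ) := Nat.prime_iff_prime_int.1 Fact.out
  refine algebraMap_dvd_of_dvd_norm_of_dvd_im hp hz ?_
  by_contra him
  obtain ⟨t, ht⟩ := exists_root_of_dvd_norm hz him
  exact hroot t ht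

lemma orderOf_eq_three_iff {R : Type*} [CommRing R] [NoZeroDivisors R] (h3 : (3 : R) ≠ 0) {t : R} :
    orderOf t = 3 ↔ t ^ 2 + t = -1 := by
  have hfactor : t ^ 3 - 1 = (t - 1) * (t ^ 2 + t + 1) := by ring
  rw [orderOf_eq_prime_iff, ← sub_eq_zero, hfactor, mul_eq_zero, sub_eq_zero,
    eq_neg_iff_add_eq_zero]
  refine ⟨fun ⟨h, ht⟩ ↦ h.resolve_left ht, fun h ↦ ⟨.inr h, ?_⟩⟩
  rintro rfl
  exact h3 (by linear_combination h)

lemma exists_sq_add_self_eq_neg_one_iff {F : Type*} [Field F] [Fintype F] (h3 : (3 : F) ≠ 0) :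
    (∃ t : F, t ^ 2 + t = -1) ↔ Fintype.card F % 3 = 1 := by
  classical
  have hcard : 3 ∣ Fintype.card Fˣ ↔ Fintype.card F % 3 = 1 := by
    rw [Fintype.card_units]
    have := Fintype.card_pos (α := F)
    omega
  simp only [← orderOf_eq_three_iff h3, ← hcard]
  constructor
  · rintro ⟨t, ht⟩
    have htu : IsUnit t := IsUnit.of_pow_eq_one (ht ▸ pow_orderOf_eq_one t) three_ne_zero
    rw [← ht, ← htu.unit_spec, orderOf_units]
    exact orderOf_dvd_card
  · intro h
    obtain ⟨u, hu⟩ := exists_prime_orderOf_dvd_card 3 h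
    exact ⟨u, by rwa [orderOf_units]⟩

lemma exists_zmod_sq_add_self_eq_neg_one_iff {p : ℕ} [Fact p.Prime] (hp3 : p ≠ 3) :
    (∃ t : ZMod p, t ^ 2 + t = -1) ↔ p % 3 = 1 := by
  have hdvd : ¬ p ∣ 3 := (Nat.prime_dvd_prime_iff_eq Fact.out Nat.prime_three).not.2 hp3
  have h3 : (3 : ZMod p) ≠ 0 := mod_cast (ZMod.natCast_eq_zero_iff 3 p).not.2 hdvd
  rw [exists_sq_add_self_eq_neg_one_iff h3, ZMod.card]

lemma exists_ne_zero_sq_le_intCast_eq_mul (n : ℕ) [NeZero n] (t : ZMod n) :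
    ∃ x y : ℤ, (x, y) ≠ 0 ∧ x ^ 2 ≤ n ∧ y ^ 2 ≤ n ∧ (x : ZMod n) = t * y := by
  set k := n.sqrt
  have hcard : (Finset.univ : Finset (ZMod n)).card <
      (Finset.range (k + 1) ×ˢ Finset.range (k + 1)).card := by
    simpa [ZMod.card] using Nat.lt_succ_sqrt n
  obtain ⟨⟨x, y⟩, hxy, ⟨x', y'⟩, hxy', hne, heq⟩ := Finset.exists_ne_map_eq_of_card_lt_of_maps_to
    hcard (f := fun v ↦ (v.1 - t * v.2 : ZMod n)) (fun _ _ ↦ Finset.mem_univ _)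
  simp only [Finset.mem_product, Finset.mem_range] at hxy hxy'
  have hsq (u v : ℕ) (hu : u < k + 1) (hv : v < k + 1) : ((u : ℤ) - v) ^ 2 ≤ n := by
    have hkn : ((k : ℤ)) ^ 2 ≤ n := by exact_mod_cast Nat.sqrt_le' n
    exact (sq_le_sq' (by omega) (by omega)).trans hkn
  refine ⟨x - x', y - y', ?_, hsq _ _ hxy.1 hxy'.1, hsq _ _ hxy.2 hxy'.2, ?_⟩
  · contrapose! hne
    simpa [sub_eq_zero] using hne
  · push_cast
    linear_combination heq

end ResidueFields

/-- The ring `ℤ[ω]` with `ω² = ω - 1`, that is, `ω = exp (π i / 3)`. With this choice of generator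
the norm of `x + y ω` is the hexagonal form `x² + x y + y²`. -/
abbrev EisensteinInt : Type := QuadraticAlgebra ℤ (-1) 1

namespace EisensteinInt

lemma norm_eq (z : EisensteinInt) : z.norm = z.re ^ 2 + z.re * z.im + z.im ^ 2 := by
  rw [QuadraticAlgebra.norm_def]
  ring

lemma re_sq_le (z : EisensteinInt) : z.re ^ 2 ≤ 2 * z.norm := by
  rw [norm_eq]
  nlinarith [sq_nonneg (z.re + z.im)]

lemma im_sq_le (z : EisensteinInt) : z.im ^ 2 ≤ 2 * z.norm := by
  rw [norm_eq]
  nlinarith [sq_nonneg (z.re + z.im)]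

lemma norm_nonneg (z : EisensteinInt) : 0 ≤ z.norm := by
  linarith [re_sq_le z, sq_nonneg z.re]

lemma norm_eq_zero {z : EisensteinInt} : z.norm = 0 ↔ z = 0 := by
  refine ⟨fun h ↦ ?_, fun h ↦ by simp [h]⟩
  have hre := re_sq_le z
  have him := im_sq_le z
  rw [h, mul_zero, sq_nonpos_iff] at hre him
  exact QuadraticAlgebra.ext hre him

lemma finite_norm_eq (n : ℤ) : {z : EisensteinInt | z.norm = n}.Finite := by
  have habs {u : ℤ} (hu : u ^ 2 ≤ 2 * n) : u ∈ Set.Icc (-(2 * n)) (2 * n) :=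
    ⟨by linarith [Int.le_self_sq (-u), neg_sq u], by linarith [Int.le_self_sq u]⟩
  refine (((Set.finite_Icc (-(2 * n)) (2 * n)).prod (Set.finite_Icc (-(2 * n)) (2 * n))).preimage
    (QuadraticAlgebra.equivProd _ _).injective.injOn).subset ?_
  rintro z rfl
  exact ⟨habs (re_sq_le z), habs (im_sq_le z)⟩

lemma algebraMap_dvd_of_mod_three_eq_two {p : ℕ} (hp : p.Prime) (hmod : p % 3 = 2)
    {z : EisensteinInt} (hz : (p : ℤ) ∣ z.norm) : algebraMap ℤ _ (p : ℤ) ∣ z := by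
  have : Fact p.Prime := ⟨hp⟩
  refine algebraMap_dvd_of_dvd_norm_of_inert (fun t ht ↦ ?_) hz
  have := (exists_zmod_sq_add_self_eq_neg_one_iff (by omega)).1 ⟨t, by simpa using ht⟩
  omega

lemma exists_norm_eq_mul_of_mod_three_eq_one {p : ℕ} (hp : p.Prime) (hmod : p % 3 = 1) :
    ∃ (z : EisensteinInt) (q : ℤ), z.norm = p * q ∧ 0 < q ∧ q < 3 := by
  have : Fact p.Prime := ⟨hp⟩
  have hp0 : (0 : ℤ) < p := mod_cast hp.pos
  obtain ⟨t, ht⟩ := (exists_zmod_sq_add_self_eq_neg_one_iff (by omega)).2 hmod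
  obtain ⟨x, y, hxy, hx, hy, hxty⟩ := exists_ne_zero_sq_le_intCast_eq_mul p t
  let z : EisensteinInt := ⟨x, y⟩
  have hdvd : (p : ℤ) ∣ z.norm := by
    rw [← ZMod.intCast_zmod_eq_zero_iff_dvd, norm_eq]
    push_cast
    rw [hxty]
    linear_combination (y : ZMod p) ^ 2 * ht
  have hpos : 0 < z.norm := by
    refine (norm_nonneg z).lt_of_ne' fun h ↦ hxy ?_
    exact congrArg (QuadraticAlgebra.equivProd _ _) (norm_eq_zero.1 h)
  have hlt {u : ℤ} (hu : u ^ 2 ≤ p) : u ^ 2 < p :=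
    hu.lt_of_ne fun h ↦ (Nat.prime_iff_prime_int.1 hp).not_isSquare ⟨u, by rw [← h, sq]⟩
  have hlt3 : z.norm < p * 3 := by
    rw [norm_eq]
    nlinarith [hlt hx, hlt hy, sq_nonneg (x - y)]
  obtain ⟨q, hq⟩ := hdvd
  rw [hq] at hpos hlt3
  exact ⟨z, q, hq, pos_of_mul_pos_right hpos hp0.le, lt_of_mul_lt_mul_left hlt3 hp0.le⟩

lemma exists_norm_eq_of_mod_three_eq_one {p : ℕ} (hp : p.Prime) (hmod : p % 3 = 1) :
    ∃ z : EisensteinInt, z.norm = p := by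
  obtain ⟨z, q, hz, hq0, hq3⟩ := exists_norm_eq_mul_of_mod_three_eq_one hp hmod
  obtain rfl | rfl : q = 1 ∨ q = 2 := by omega
  · exact ⟨z, by rw [hz, mul_one]⟩
  -- Since `2` is inert, `2 ∣ N z` would force `4 ∣ N z = 2 p`.
  · obtain ⟨u, rfl⟩ := algebraMap_dvd_of_mod_three_eq_two Nat.prime_two rfl
      (Dvd.intro_left _ hz.symm)
    rw [map_mul, QuadraticAlgebra.norm_algebraMap] at hz
    have heven : 2 ∣ p := by push_cast at hz; omega
    rw [← (Nat.prime_dvd_prime_iff_eq Nat.prime_two hp).1 heven] at hmod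
    omega

/-- The number of elements of norm `n` in `ℤ[ω]`, that is, the number of representations of `n` by
the form `x² + x y + y²`. -/
def repCount (n : ℕ) : ℕ := {z : EisensteinInt | z.norm = n}.ncard

lemma coe_repCount (n : ℕ) : (repCount n : ℕ∞) = {z : EisensteinInt | z.norm = n}.encard :=
  (finite_norm_eq n).cast_ncard_eq

lemma repCount_one : repCount 1 = 6 := by
  have hunits : {z : EisensteinInt | z.norm = (1 : ℕ)} =
      (({⟨1, 0⟩, ⟨0, 1⟩, ⟨-1, 1⟩, ⟨-1, 0⟩, ⟨0, -1⟩, ⟨1, -1⟩} : Finset EisensteinInt) :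
        Set EisensteinInt) := by
    ext ⟨x, y⟩
    simp only [Set.mem_ofPred_eq, norm_eq, Nat.cast_one, Finset.coe_insert, Finset.coe_singleton,
      Set.mem_insert_iff, Set.mem_singleton_iff, QuadraticAlgebra.mk.injEq]
    refine ⟨fun h ↦ ?_, by rintro (h | h | h | h | h | h) <;> simp [h]⟩
    have hx : x ^ 2 < 2 ^ 2 := by nlinarith [sq_nonneg (x + 2 * y)]
    have hy : y ^ 2 < 2 ^ 2 := by nlinarith [sq_nonneg (2 * x + y)]
    obtain ⟨hx₁, hx₂⟩ := abs_lt_of_sq_lt_sq' hx zero_le_two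
    obtain ⟨hy₁, hy₂⟩ := abs_lt_of_sq_lt_sq' hy zero_le_two
    interval_cases x <;> interval_cases y <;> simp_all
  rw [repCount, hunits, Set.ncard_coe_finset]
  decide

lemma encard_norm_eq_natCast_mul_and_dvd {p : ℕ} (hp : p ≠ 0) (n : ℕ) :
    {z : EisensteinInt | z.norm = (p : ℤ) * n ∧ algebraMap ℤ _ (p : ℤ) ∣ z}.encard =
      ((if p ∣ n then repCount (n / p) else 0 : ℕ) : ℕ∞) := by
  have hp0 : (p : ℤ) ≠ 0 := mod_cast hp
  rw [encard_norm_eq_mul_and_algebraMap_dvd hp0]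
  split_ifs with hpn
  · obtain ⟨m, rfl⟩ := hpn
    simp only [Nat.mul_div_cancel_left m (Nat.pos_of_ne_zero hp), coe_repCount, Nat.cast_mul,
      mul_right_inj' hp0]
  · rw [Nat.cast_zero, Set.encard_eq_zero, Set.eq_empty_iff_forall_notMem]
    exact fun z hz ↦ hpn (Int.natCast_dvd_natCast.1 (Dvd.intro _ hz))

lemma repCount_three_mul (n : ℕ) : repCount (3 * n) = repCount n := by
  let w : EisensteinInt := ⟨1, 1⟩
  have hw : w.norm = (3 : ℕ) := by rw [norm_eq]; rfl
  have hstar : w ∣ star w := ⟨⟨1, -1⟩, by ext <;> simp [w]⟩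
  have h := encard_norm_eq_norm_mul_of_ramified (hw ▸ Nat.prime_iff_prime_int.1 Nat.prime_three)
    hstar n
  rw [hw, ← Nat.cast_mul, ← coe_repCount, ← coe_repCount] at h
  exact_mod_cast h

lemma repCount_mul_of_mod_three_eq_two {p : ℕ} (hp : p.Prime) (hmod : p % 3 = 2) (n : ℕ) :
    repCount (p * n) = if p ∣ n then repCount (n / p) else 0 := by
  rw [← Nat.cast_inj (R := ℕ∞), coe_repCount, Nat.cast_mul,
    ← encard_norm_eq_natCast_mul_and_dvd hp.ne_zero]
  congr 1
  ext z
  simp only [Set.mem_ofPred_eq, iff_self_and]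
  exact fun hz ↦ algebraMap_dvd_of_mod_three_eq_two hp hmod (Dvd.intro _ hz.symm)

lemma repCount_mul_add_of_mod_three_eq_one {p : ℕ} (hp : p.Prime) (hmod : p % 3 = 1) (n : ℕ) :
    repCount (p * n) + (if p ∣ n then repCount (n / p) else 0) = 2 * repCount n := by
  obtain ⟨w, hw⟩ := exists_norm_eq_of_mod_three_eq_one hp hmod
  have hdisc : ¬ w.norm ∣ 1 ^ 2 + 4 * (-1) := by
    rw [hw, show (1 ^ 2 + 4 * (-1) : ℤ) = -(3 : ℕ) by norm_num, dvd_neg, Int.natCast_dvd_natCast,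
      Nat.prime_dvd_prime_iff_eq hp Nat.prime_three]
    omega
  have h := encard_norm_eq_norm_mul_of_split (hw ▸ Nat.prime_iff_prime_int.1 hp) hdisc n
  rw [hw, encard_norm_eq_natCast_mul_and_dvd hp.ne_zero, ← Nat.cast_mul, ← coe_repCount,
    ← coe_repCount] at h
  exact_mod_cast h

end EisensteinInt

section HeckeRelation

variable {R : Type*} [CommRing R]

/-- The relation satisfied by the eigenfunctions of the weight-one Hecke operators of character `χ`
whose eigenvalue at each prime `p` is `1 + χ p`. It determines `f` on the positive
integers from `f 1`. -/
def HeckeRelation (χ f : ℕ → R) : Prop :=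
  ∀ ⦃p : ℕ⦄, p.Prime → ∀ n : ℕ,
    f (p * n) + χ p * (if p ∣ n then f (n / p) else 0) = (1 + χ p) * f n

lemma HeckeRelation.const_mul {χ f : ℕ → R} (hf : HeckeRelation χ f) (c : R) :
    HeckeRelation χ (fun n ↦ c * f n) := by
  intro p hp n
  have h := hf hp n
  split_ifs at h ⊢ <;> linear_combination c * h

lemma HeckeRelation.eq_of_apply_one_eq {χ f g : ℕ → R} (hf : HeckeRelation χ f)
    (hg : HeckeRelation χ g) (hone : f 1 = g 1) {n : ℕ} (hn : n ≠ 0) : f n = g n := by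
  induction n using Nat.strong_induction_on with
  | _ n ih =>
    by_cases hn1 : n = 1
    · rw [hn1, hone]
    obtain ⟨p, hp, m, rfl⟩ := Nat.exists_prime_and_dvd hn1
    have hm : m ≠ 0 := right_ne_zero_of_mul hn
    have hlt : m < p * m := lt_mul_left hm.bot_lt hp.one_lt
    have hdiv : (if p ∣ m then f (m / p) else 0) = if p ∣ m then g (m / p) else 0 := by
      split_ifs with hpm
      · have hne := (Nat.div_ne_zero_iff_of_dvd hpm).2 ⟨hm, hp.ne_zero⟩
        exact ih _ ((Nat.div_le_self m p).trans_lt hlt) hne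
      · rfl
    have h := hf hp m
    rw [hdiv, ih m hlt hm, ← hg hp m] at h
    exact add_right_cancel h

lemma sum_divisors_mul_filter_dvd (χ : ℕ →* R) {p : ℕ} (hp : p ≠ 0) (m : ℕ) :
    ∑ d ∈ (p * m).divisors with p ∣ d, χ d = χ p * ∑ d ∈ m.divisors, χ d := by
  rw [Finset.mul_sum]
  symm
  refine Finset.sum_nbij (p * ·) (fun d hd ↦ ?_) (mul_right_injective₀ hp).injOn ?_
    fun d _ ↦ (map_mul χ p d).symm
  · rw [Nat.mem_divisors] at hd
    simp [hp, hd, Nat.mul_dvd_mul_left]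
  · intro d hd
    simp only [Finset.coe_filter, Nat.mem_divisors, Set.mem_ofPred_eq] at hd
    obtain ⟨⟨hdvd, hne⟩, e, rfl⟩ := hd
    exact ⟨e, by simpa using ⟨Nat.dvd_of_mul_dvd_mul_left hp.bot_lt hdvd,
      right_ne_zero_of_mul hne⟩, rfl⟩

lemma sum_divisors_filter_dvd (χ : ℕ →* R) {p : ℕ} (hp : p ≠ 0) (n : ℕ) :
    ∑ d ∈ n.divisors with p ∣ d, χ d =
      χ p * if p ∣ n then ∑ d ∈ (n / p).divisors, χ d else 0 := by
  split_ifs with hpn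
  · obtain ⟨m, rfl⟩ := hpn
    rw [sum_divisors_mul_filter_dvd χ hp, Nat.mul_div_cancel_left m hp.bot_lt]
  · rw [mul_zero]
    refine Finset.sum_eq_zero fun d hd ↦ absurd ?_ hpn
    rw [Finset.mem_filter, Nat.mem_divisors] at hd
    exact hd.2.trans hd.1.1

lemma divisors_mul_filter_not_dvd {p n : ℕ} (hp : p.Prime) :
    {d ∈ (p * n).divisors | ¬ p ∣ d} = {d ∈ n.divisors | ¬ p ∣ d} := by
  ext d
  simp only [Finset.mem_filter, Nat.mem_divisors, mul_ne_zero_iff, and_congr_left_iff]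
  intro hpd
  rw [((hp.coprime_iff_not_dvd.2 hpd).symm).dvd_mul_left]
  simp [hp.ne_zero]

lemma heckeRelation_sum_divisors (χ : ℕ →* R) : HeckeRelation χ fun n ↦ ∑ d ∈ n.divisors, χ d := by
  intro p hp n
  dsimp only
  rw [← Finset.sum_filter_add_sum_filter_not (p * n).divisors (p ∣ ·),
    sum_divisors_mul_filter_dvd χ hp.ne_zero, divisors_mul_filter_not_dvd hp,
    ← sum_divisors_filter_dvd χ hp.ne_zero, add_assoc, add_comm (∑ d ∈ _ with ¬ _, _),
    Finset.sum_filter_add_sum_filter_not]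
  ring

end HeckeRelation

section ModThree

variable {R : Type*} [CommRing R] [NoZeroDivisors R] {χ : DirichletCharacter R 3}

lemma dirichletCharacter_three_apply_two (hχ : χ ≠ 1) : χ 2 = -1 := by
  have hsq : χ 2 * χ 2 = 1 := by
    rw [← map_mul, show (2 * 2 : ZMod 3) = 1 by decide, map_one]
  refine (mul_self_eq_one_iff.1 hsq).resolve_left fun htwo ↦ hχ ?_
  ext u
  rw [MulChar.one_apply_coe]
  have hunit : ∀ v : (ZMod 3)ˣ, (v : ZMod 3) = 1 ∨ (v : ZMod 3) = 2 := by decide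
  rcases hunit u with hu | hu <;> rw [hu]
  exacts [map_one χ, htwo]

lemma heckeRelation_repCount (hχ : χ ≠ 1) :
    HeckeRelation (fun n ↦ χ n) fun n ↦ (EisensteinInt.repCount n : R) := by
  intro p hp n
  have hχp : χ p = χ ((p % 3 : ℕ) : ZMod 3) := by simp
  have hmod : p % 3 = 0 ∨ p % 3 = 1 ∨ p % 3 = 2 := by omega
  dsimp only
  rcases hmod with h | h | h <;> rw [hχp, h]
  · obtain rfl := (Nat.prime_dvd_prime_iff_eq Nat.prime_three hp).1 (Nat.dvd_of_mod_eq_zero h)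
    rw [Nat.cast_zero, MulChar.map_zero, EisensteinInt.repCount_three_mul]
    ring
  · have hsplit := congrArg (Nat.cast (R := R))
      (EisensteinInt.repCount_mul_add_of_mod_three_eq_one hp h n)
    push_cast at hsplit
    rw [Nat.cast_one, map_one, one_mul, hsplit]
    ring
  · rw [EisensteinInt.repCount_mul_of_mod_three_eq_two hp h, Nat.cast_ofNat,
      dirichletCharacter_three_apply_two hχ]
    push_cast
    ring

theorem repCount_eq_six_mul_sum_divisors (hχ : χ ≠ 1) {n : ℕ} (hn : n ≠ 0) :
    (EisensteinInt.repCount n : R) = 6 * ∑ d ∈ n.divisors, χ d :=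
  (heckeRelation_repCount hχ).eq_of_apply_one_eq
    ((heckeRelation_sum_divisors (χ.toMonoidHom.comp (Nat.castRingHom (ZMod 3)))).const_mul 6)
    (by simp [EisensteinInt.repCount_one]) hn

end ModThree

section DirichletSeries

lemma hasSum_const_of_finite {ι M : Type*} [Finite ι] [AddCommMonoid M] [TopologicalSpace M]
    (c : M) : HasSum (fun _ : ι ↦ c) (Nat.card ι • c) := by
  have := Fintype.ofFinite ι
  simpa [Nat.card_eq_fintype_card] using hasSum_fintype fun _ : ι ↦ c

lemma hasSum_comp_of_finite_fibers {α β E : Type*} [NormedAddCommGroup E] [CompleteSpace E]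
    {g : α → β} {F : β → E} {a : E} (hfin : ∀ b, {x | g x = b}.Finite)
    (hnorm : Summable fun b ↦ {x | g x = b}.ncard • ‖F b‖)
    (hsum : HasSum (fun b ↦ {x | g x = b}.ncard • F b) a) : HasSum (F ∘ g) a := by
  have hfinite (b : β) : Finite {x // g x = b} := hfin b
  have hcomp (x : (b : β) × {x // g x = b}) : (F ∘ g ∘ Equiv.sigmaFiberEquiv g) x = F x.1 :=
    congrArg F x.2.2
  rw [← (Equiv.sigmaFiberEquiv g).hasSum_iff, Function.comp_assoc, funext hcomp]
  refine hsum.sigma_of_hasSum (fun b ↦ hasSum_const_of_finite (F b)) (.of_norm ?_)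
  rw [summable_sigma_of_nonneg fun _ ↦ norm_nonneg _]
  have hconst (b : β) := hasSum_const_of_finite (ι := {x // g x = b}) ‖F b‖
  exact ⟨fun b ↦ (hconst b).summable, hnorm.congr fun b ↦ (hconst b).tsum_eq.symm⟩

lemma lSeriesHasSum_sum_divisors {N : ℕ} [NeZero N] (χ : DirichletCharacter ℂ N) {s : ℂ}
    (hs : 1 < s.re) : LSeriesHasSum (fun n ↦ ∑ d ∈ n.divisors, χ d) s
      (riemannZeta s * DirichletCharacter.LFunction χ s) := by
  have hχ := (χ.LSeriesSummable_of_one_lt_re hs).LSeriesHasSum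
  rw [← χ.LFunction_eq_LSeries hs] at hχ
  convert (LSeriesHasSum_one hs).convolution hχ using 1
  rw [LSeries.convolution_def]
  ext n
  simp only [Pi.one_apply, one_mul]
  exact (Nat.sum_divisorsAntidiagonal' fun _ d ↦ χ d).symm

lemma lSeriesHasSum_repCount {χ : DirichletCharacter ℂ 3} (hχ : χ ≠ 1) {s : ℂ} (hs : 1 < s.re) :
    LSeriesHasSum (fun n ↦ EisensteinInt.repCount n) s
      (6 * (riemannZeta s * DirichletCharacter.LFunction χ s)) :=
  (LSeriesHasSum_congr s _ fun hn ↦ repCount_eq_six_mul_sum_divisors hχ hn).2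
    ((lSeriesHasSum_sum_divisors χ hs).smul 6)

namespace EisensteinInt

lemma form_nonneg (x y : ℤ) : 0 ≤ x ^ 2 + x * y + y ^ 2 :=
  norm_eq ⟨x, y⟩ ▸ norm_nonneg ⟨x, y⟩

lemma natAbs_norm_eq_iff {z : EisensteinInt} {n : ℕ} : z.norm.natAbs = n ↔ z.norm = (n : ℤ) := by
  have := norm_nonneg z
  omega

lemma hasSum_norm_cpow_neg {s a : ℂ} (hs : s ≠ 0) (h : LSeriesHasSum (fun n ↦ repCount n) s a) :
    HasSum (fun z : EisensteinInt ↦ (z.norm : ℂ) ^ (-s)) a := by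
  have hterm : LSeries.term (fun n ↦ repCount n) s = fun n ↦ repCount n • (n : ℂ) ^ (-s) := by
    ext n
    rw [LSeries.term_of_ne_zero' hs, Complex.cpow_neg, nsmul_eq_mul, div_eq_mul_inv]
  rw [LSeriesHasSum, hterm] at h
  have hcomp : (fun z : EisensteinInt ↦ (z.norm : ℂ) ^ (-s)) =
      (fun n : ℕ ↦ (n : ℂ) ^ (-s)) ∘ fun z ↦ z.norm.natAbs := by
    ext z
    rw [Function.comp_apply, ← Int.cast_natCast, Int.natAbs_of_nonneg (norm_nonneg z)]
  rw [hcomp]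
  refine hasSum_comp_of_finite_fibers (fun n ↦ ?_) ?_ ?_
  · simpa only [natAbs_norm_eq_iff] using finite_norm_eq n
  · simpa only [natAbs_norm_eq_iff, repCount, RCLike.norm_nsmul ℂ] using h.summable.norm
  · simpa only [natAbs_norm_eq_iff, repCount] using h

lemma hasSum_form_cpow_neg_iff {s a : ℂ} (hs : s ≠ 0) :
    HasSum (fun p : {p : ℤ × ℤ // p ≠ 0} ↦
        ((p.1.1 ^ 2 + p.1.1 * p.1.2 + p.1.2 ^ 2 : ℤ) : ℂ) ^ (-s)) a ↔
      HasSum (fun z : EisensteinInt ↦ (z.norm : ℂ) ^ (-s)) a := by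
  rw [← (QuadraticAlgebra.equivProd (-1 : ℤ) 1).symm.hasSum_iff]
  simp only [Function.comp_def, norm_eq]
  refine hasSum_subtype_iff_of_support_subset (s := {0}ᶜ)
    (f := fun p : ℤ × ℤ ↦ ((p.1 ^ 2 + p.1 * p.2 + p.2 ^ 2 : ℤ) : ℂ) ^ (-s)) ?_
  rw [Function.support_subset_iff']
  simp [hs]

end EisensteinInt

end DirichletSeries

end HexagonalLattice

open HexagonalLattice

theorem hexagonal_lattice_zeta_factorization_general (s : ℂ) (hs : 2 < s.re)
    (χ : DirichletCharacter ℂ 3) (hχ : χ ≠ 1) :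
    HasSum (fun p : {p : ℤ × ℤ // p ≠ 0} ↦
        ((p.1.1 ^ 2 + p.1.1 * p.1.2 + p.1.2 ^ 2 : ℤ) : ℂ) ^ (-(s / 2)))
      (6 * riemannZeta (s / 2) * DirichletCharacter.LFunction χ (s / 2)) := by
  have hre : 1 < (s / 2).re := by
    rw [Complex.div_ofNat_re]
    linarith
  have hne : s / 2 ≠ 0 := by
    intro h
    norm_num [h] at hre
  rw [EisensteinInt.hasSum_form_cpow_neg_iff hne, mul_assoc]
  exact EisensteinInt.hasSum_norm_cpow_neg hne (lSeriesHasSum_repCount hχ hre)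

/-- **Factorization of the hexagonal lattice zeta function.** For real `s > 2`,
`∑_{(m,n) ≠ (0,0)} (m² + mn + n²)^{−s/2} = 6 · ζ(s/2) · L(χ₃, s/2)`, where `ζ` is the
Riemann zeta function and `χ₃` is the unique nontrivial (quadratic) Dirichlet character
mod 3 (so `L(χ₃, w) = 1 − 2^{−w} + 4^{−w} − 5^{−w} + ⋯`). -/
theorem hexagonal_lattice_zeta_factorization (s : ℝ) (hs : 2 < s)
    (χ : DirichletCharacter ℂ 3) (hχ : χ ≠ 1) :
    ((∑' p : {p : ℤ × ℤ // p ≠ 0},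
        ((p.1.1 ^ 2 + p.1.1 * p.1.2 + p.1.2 ^ 2 : ℤ) : ℝ) ^ (-(s / 2)) : ℝ) : ℂ)
      = 6 * riemannZeta ((s : ℂ) / 2) * DirichletCharacter.LFunction χ ((s : ℂ) / 2) := by
  rw [← (hexagonal_lattice_zeta_factorization_general s hs χ hχ).tsum_eq, Complex.ofReal_tsum]
  refine tsum_congr fun p ↦ ?_
  rw [Complex.ofReal_cpow (mod_cast EisensteinInt.form_nonneg p.1.1 p.1.2)]
  simp
end
end
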